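/- arXiv:2501.07177 — 3 statements merged into one kernel-verified Lean document; each statement's English description precedes it below -/
import Mathlib

section
/- Descent equations on the lattice: Let D ≥ 1, let r ≥ 1 and 1 ≤ k ≤ r, and let A_0, …, A_k be lattice 1-forms on ℤ^D. Set F_i = dA_i and η^{i,j} = A_i − A_j, and define the (2r−k)-form Q_r^{(k)}(A_0,…,A_k) = Σ_{m_0+⋯+m_k = r−k, m_i ∈ ℕ} F_0^{m_0} ∧ η^{1,0} ∧ F_1^{m_1} ∧ η^{2,1} ∧ ⋯ ∧ η^{k,k−1} ∧ F_k^{m_k} (powers are iterated noncommutative wedge products, the empty product is omitted). Then d Q_r^{(k)}(A_0,…,A_k) = Σ_{i=0}^{k} (−1)^i Q_r^{(k−1)}(A_0,…,Â_i,…,A_k), where Â_i means that the argument A_i is omitted. -/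
open scoped BigOperators

/-- A site of the hypercubic lattice `ℤ^D`. -/
abbrev Site (D : ℕ) := Fin D → ℤ

/-- The coefficient function of a lattice form on `ℤ^D`: to each site it assigns a
real coefficient depending on a sequence of direction indices (a `k`-form only
uses the first `k` indices). -/
abbrev Coeff (D : ℕ) := Site D → (ℕ → Fin D) → ℝ

/-- Shift a site by the `μ`-th standard basis vector `ê_μ`. -/
def shiftSite {D : ℕ} (n : Site D) (μ : Fin D) : Site D :=
  fun ν => n ν + if ν = μ then 1 else 0

/-- Forward difference operator `(Δ_μ f)(n) = f(n + ê_μ) - f(n)`. -/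
def fdiff {D : ℕ} (μ : Fin D) (f : Site D → ℝ) (n : Site D) : ℝ :=
  f (shiftSite n μ) - f n

/-- Shift a site by `ê_{μ 0} + ê_{μ 1} + ⋯ + ê_{μ (k-1)}`. -/
def multiShift {D : ℕ} (k : ℕ) (n : Site D) (μ : ℕ → Fin D) : Site D :=
  fun ν => n ν + ∑ i ∈ Finset.range k, (if ν = μ i then 1 else 0)

/-- Antisymmetrization of a coefficient function over its first `k` indices. -/
noncomputable def alt {D : ℕ} (k : ℕ) (c : Coeff D) : Coeff D :=
  fun n μ => ((k.factorial : ℝ))⁻¹ *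
    ∑ σ : Equiv.Perm (Fin k), ((Equiv.Perm.sign σ : ℤ) : ℝ) *
      c n (fun i => if h : i < k then μ ↑(σ ⟨i, h⟩) else μ i)

/-- The lattice exterior derivative of a `k`-form: the antisymmetrization over all
`k+1` indices of `Δ_μ ω_{μ₁⋯μ_k}(n)`. -/
noncomputable def extd {D : ℕ} (k : ℕ) (ω : Coeff D) : Coeff D :=
  alt (k+1) (fun n μ => fdiff (μ 0) (fun x => ω x (fun i => μ (i+1))) n)

/-- The noncommutative wedge product of a `k`-form and an `l`-form on the lattice:
the antisymmetrization over all `k+l` indices of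
`ω_{μ₁⋯μ_k}(n) · θ_{ν₁⋯ν_l}(n + ê_{μ₁} + ⋯ + ê_{μ_k})`. -/
noncomputable def wedge {D : ℕ} (k l : ℕ) (ω θ : Coeff D) : Coeff D :=
  alt (k+l) (fun n μ => ω n μ * θ (multiShift k n μ) (fun i => μ (i+k)))

/-- Iterated noncommutative wedge power of a 2-form (the empty product is the
constant `1`, a 0-form). -/
noncomputable def wpow {D : ℕ} (F : Coeff D) : ℕ → Coeff D
  | 0 => fun _ _ => 1
  | m+1 => wedge 2 (2*m) F (wpow F m)

/-- Noncommutative wedge product of a list of (degree, form) pairs. -/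
noncomputable def wedgeList {D : ℕ} : List (ℕ × Coeff D) → Coeff D
  | [] => fun _ _ => 1
  | (d, ω) :: rest => wedge d ((rest.map Prod.fst).sum) ω (wedgeList rest)

/-- `ω` is a genuine lattice `k`-form: its coefficient depends only on the first
`k` indices and is totally antisymmetric in them. -/
def IsLatticeForm (D k : ℕ) (ω : Coeff D) : Prop :=
  (∀ (n : Site D) (μ ν : ℕ → Fin D), (∀ i < k, μ i = ν i) → ω n μ = ω n ν) ∧
  (∀ (n : Site D) (μ : ℕ → Fin D) (σ : Equiv.Perm (Fin k)),
    ω n (fun i => if h : i < k then μ ↑(σ ⟨i, h⟩) else μ i)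
      = ((Equiv.Perm.sign σ : ℤ) : ℝ) * ω n μ)

/-- Extend a tuple `m : Fin j → ℕ` to `ℕ → ℕ` by zero. -/
def mext {j : ℕ} (m : Fin j → ℕ) : ℕ → ℕ :=
  fun i => if h : i < j then m ⟨i, h⟩ else 0

/-- The curvature 2-form `F = dA` of a lattice 1-form `A`. -/
noncomputable def curv {D : ℕ} (A : Coeff D) : Coeff D := extd 1 A

/-- The standard descent product
`F_0^{m_0} ∧ η^{1,0} ∧ F_1^{m_1} ∧ η^{2,1} ∧ ⋯ ∧ η^{k,k-1} ∧ F_k^{m_k}`,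
with `F_i = dA_i` and `η^{i,i-1} = A_i - A_{i-1}`, as a list of (degree, form) pairs. -/
noncomputable def descentList {D : ℕ} (k : ℕ) (A : ℕ → Coeff D) (m : ℕ → ℕ) : List (ℕ × Coeff D) :=
  (2 * m 0, wpow (curv (A 0)) (m 0)) ::
    (List.range k).flatMap (fun i =>
      [(1, A (i+1) - A i), (2 * m (i+1), wpow (curv (A (i+1))) (m (i+1)))])

/-- The Chern–Simons type characteristic class `Q_r^{(k)}(A_0,…,A_k)` on the lattice:
the sum over compositions `m_0 + ⋯ + m_k = r - k` of the descent products. -/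
noncomputable def Qpoly {D : ℕ} (r k : ℕ) (A : ℕ → Coeff D) : Coeff D :=
  ∑ m ∈ Finset.Nat.antidiagonalTuple (k+1) (r - k), wedgeList (descentList k A (mext m))

/-!
By the rule `dx_μ · f = f(· + ê_μ) · dx_μ`, a lattice form `∑ ω_{μ_1⋯μ_k} dx_{μ_1} ∧ ⋯ ∧ dx_{μ_k}`
acts on lattice fields with values in the exterior algebra: functions act by multiplication, and
`dx_μ` translates by `ê_μ` and multiplies by a generator. The wedge product becomes composition of
operators and `d` the graded commutator with `u = ∑ dx_μ`. As `u² = 0`, the curvature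
`F_i = u A_i + A_i u` commutes with `u`, so `d F_i = 0`.

The generating series `∑_n X^n Q_{n+k}^{(k)}` is the word `G_0 η^{1,0} G_1 ⋯ η^{k,k-1} G_k` in the
resolvents `G_i = (1 - X F_i)⁻¹`. The graded commutator with `X u` replaces each `η^{i+1,i}` in turn
by `X (F_{i+1} - F_i)`, and the resolvent identity
`G_i X (F_{i+1} - F_i) G_{i+1} = G_{i+1} - G_i` turns the result into the alternating sum over
omitted indices. The antisymmetric coefficients of a form are minors of its operator's value at `1`,
so an identity of operators is an identity of forms.
-/

section Algebra

variable {α R : Type*}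

/-- The index of the `j`-th entry of a sequence from which the `i`-th entry is omitted, so that
`a ∘ omitIdx i` is the sequence `a_0, …, â_i, …`. -/
def omitIdx (i j : ℕ) : ℕ := if j < i then j else j + 1

theorem comp_omitIdx_zero (a : ℕ → α) : a ∘ omitIdx 0 = a ∘ Nat.succ := by
  ext j
  simp [omitIdx]

theorem omitIdx_succ_zero (i : ℕ) : omitIdx (i + 1) 0 = 0 := rfl

theorem comp_omitIdx_succ_comp_succ (i : ℕ) (a : ℕ → α) :
    (a ∘ omitIdx (i + 1)) ∘ Nat.succ = (a ∘ Nat.succ) ∘ omitIdx i := by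
  ext j
  by_cases h : j < i <;> simp [omitIdx, h]

/-- The tuple `m` continued by zeros to an infinite sequence; `mext` is the case of natural
numbers. -/
def extendZero [Zero α] {k : ℕ} (m : Fin k → α) : ℕ → α :=
  fun i => if h : i < k then m ⟨i, h⟩ else 0

theorem extendZero_of_lt [Zero α] {k : ℕ} (m : Fin k → α) {i : ℕ} (h : i < k) :
    extendZero m i = m ⟨i, h⟩ := dif_pos h

theorem extendZero_of_le [Zero α] {k : ℕ} (m : Fin k → α) {i : ℕ} (h : k ≤ i) :
    extendZero m i = 0 := dif_neg h.not_gt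

theorem extendZero_cons_zero [Zero α] {k : ℕ} (x : α) (m : Fin k → α) :
    extendZero (Fin.cons x m : Fin (k + 1) → α) 0 = x := rfl

theorem extendZero_cons_succ [Zero α] {k : ℕ} (x : α) (m : Fin k → α) (i : ℕ) :
    extendZero (Fin.cons x m : Fin (k + 1) → α) (i + 1) = extendZero m i := by
  by_cases h : i < k
  · rw [extendZero_of_lt _ h, extendZero_of_lt _ (Nat.succ_lt_succ h)]
    exact Fin.cons_succ (α := fun _ => α) x m ⟨i, h⟩
  · rw [extendZero_of_le _ (by lia), extendZero_of_le _ (by lia)]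

theorem sum_antidiagonalTuple_succ {M : Type*} [AddCommMonoid M] (k n : ℕ)
    (f : (Fin (k + 1) → ℕ) → M) :
    ∑ m ∈ Finset.Nat.antidiagonalTuple (k + 1) n, f m =
      ∑ p ∈ Finset.HasAntidiagonal.antidiagonal n,
        ∑ m ∈ Finset.Nat.antidiagonalTuple k p.2, f (Fin.cons p.1 m) := by
  change (((List.Nat.antidiagonal n).flatMap fun p =>
      (List.Nat.antidiagonalTuple k p.2).map (Fin.cons p.1 ·)).map f).sum =
    ((List.Nat.antidiagonal n).map fun p =>
      ((List.Nat.antidiagonalTuple k p.2).map fun m => f (Fin.cons p.1 m)).sum).sum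
  simp [List.flatMap, List.sum_flatten, Function.comp_def]

theorem sum_mul_self_eq_zero_of_anticomm [NonUnitalNonAssocRing R] (s : Finset α) (b : α → R)
    (hsq : ∀ i ∈ s, b i * b i = 0) (hanti : ∀ i ∈ s, ∀ j ∈ s, b i * b j + b j * b i = 0) :
    (∑ i ∈ s, b i) * ∑ i ∈ s, b i = 0 := by
  rw [Finset.sum_mul_sum, ← Finset.sum_product']
  refine Finset.sum_involution (fun p _ => p.swap) ?_ ?_ ?_ ?_
  · intro p hp
    rw [Finset.mem_product] at hp
    exact hanti _ hp.1 _ hp.2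
  · rintro ⟨i, j⟩ hp hne heq
    obtain rfl : j = i := congrArg Prod.fst heq
    exact hne (hsq _ (Finset.mem_product.1 hp).1)
  · exact fun p hp => Finset.mem_product.2 (Finset.mem_product.1 hp).symm
  · exact fun p _ => p.swap_swap

variable [Ring R]

theorem neg_one_pow_mul_eq_smul (S : Type*) [CommRing S] [Algebra S R] (k : ℕ) (x : R) :
    (-1) ^ k * x = (-1 : S) ^ k • x := by
  simp [Algebra.smul_def]

theorem commute_anticommutator {u : R} (hu : u * u = 0) (x : R) : Commute u (u * x + x * u) := by
  rw [Commute, SemiconjBy, mul_add, add_mul, ← mul_assoc, hu, mul_assoc x, hu, mul_assoc]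
  simp

/-- The word `G_0 (a_1 - a_0) G_1 (a_2 - a_1) ⋯ (a_k - a_{k-1}) G_k`. Both descent products
(`G_i = F_i ^ m_i`) and their generating series (`G_i = (1 - X F_i)⁻¹`) have this shape. -/
def descentWord : ℕ → (ℕ → R) → (ℕ → R) → R
  | 0, G, _ => G 0
  | k + 1, G, a => G 0 * (a 1 - a 0) * descentWord k (G ∘ Nat.succ) (a ∘ Nat.succ)

theorem descentWord_zero (G a : ℕ → R) : descentWord 0 G a = G 0 := rfl

theorem descentWord_succ (k : ℕ) (G a : ℕ → R) :
    descentWord (k + 1) G a =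
      G 0 * (a 1 - a 0) * descentWord k (G ∘ Nat.succ) (a ∘ Nat.succ) := rfl

theorem descentWord_succ_omitIdx (k i : ℕ) (G a : ℕ → R) :
    descentWord (k + 1) (G ∘ omitIdx (i + 1)) (a ∘ omitIdx (i + 1)) =
      G 0 * (a (omitIdx i 0 + 1) - a 0) *
        descentWord k ((G ∘ Nat.succ) ∘ omitIdx i) ((a ∘ Nat.succ) ∘ omitIdx i) := by
  rw [descentWord_succ, comp_omitIdx_succ_comp_succ, comp_omitIdx_succ_comp_succ]
  by_cases h : 0 < i <;> simp [omitIdx, h]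

theorem gradedCommutator_descentWord_succ {w : R} {G : ℕ → R} (a : ℕ → R)
    (hG : Commute w (G 0)) (k : ℕ) :
    w * descentWord (k + 1) G a - (-1) ^ (k + 1) * (descentWord (k + 1) G a * w) =
      G 0 * (w * (a 1 - a 0) + (a 1 - a 0) * w) *
          descentWord k (G ∘ Nat.succ) (a ∘ Nat.succ) -
        G 0 * (a 1 - a 0) * (w * descentWord k (G ∘ Nat.succ) (a ∘ Nat.succ) -
          (-1) ^ k * (descentWord k (G ∘ Nat.succ) (a ∘ Nat.succ) * w)) := by
  rw [descentWord_succ]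
  generalize descentWord k (G ∘ Nat.succ) (a ∘ Nat.succ) = P
  have hw : w * (G 0 * (a 1 - a 0) * P) = G 0 * w * (a 1 - a 0) * P := by
    rw [← mul_assoc, ← mul_assoc, hG.eq]
  rw [hw]
  rcases neg_one_pow_eq_or R k with h | h <;> rw [pow_succ, h] <;> noncomm_ring

theorem sum_descentWord_succ_omitIdx (k : ℕ) (G a : ℕ → R) :
    ∑ i ∈ Finset.range (k + 3), (-1) ^ i * descentWord (k + 1) (G ∘ omitIdx i) (a ∘ omitIdx i) =
      (G 1 - G 0) * (a 2 - a 1) *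
          descentWord k ((G ∘ Nat.succ) ∘ Nat.succ) ((a ∘ Nat.succ) ∘ Nat.succ) -
        G 0 * (a 1 - a 0) * ∑ i ∈ Finset.range (k + 2),
          (-1) ^ i * descentWord k ((G ∘ Nat.succ) ∘ omitIdx i) ((a ∘ Nat.succ) ∘ omitIdx i) := by
  have hsign (n : ℕ) (x y : R) : (-1) ^ (n + 1) * (x * y) = -(x * ((-1) ^ n * y)) := by
    rcases neg_one_pow_eq_or R n with h | h <;> simp [pow_succ, h]
  rw [Finset.sum_range_succ' _ (k + 2), Finset.sum_range_succ' _ (k + 1),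
    Finset.sum_range_succ' _ (k + 1)]
  simp only [descentWord_succ_omitIdx, omitIdx_succ_zero, comp_omitIdx_zero, hsign _ (_ * _),
    Finset.sum_neg_distrib, ← Finset.mul_sum, descentWord_succ k (G ∘ Nat.succ)]
  simp only [omitIdx, Function.comp_apply]
  noncomm_ring

/-- Moving `w` through the word produces the factors `w (a_{i+1} - a_i) + (a_{i+1} - a_i) w`, at
which the resolvent identity `hres` makes the sum telescope. -/
theorem gradedCommutator_descentWord {w : R} (k : ℕ) {G a : ℕ → R} (hG : ∀ i, Commute w (G i))
    (hres : ∀ i, G i * (w * (a (i + 1) - a i) + (a (i + 1) - a i) * w) * G (i + 1) =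
      G (i + 1) - G i) :
    w * descentWord (k + 1) G a - (-1) ^ (k + 1) * (descentWord (k + 1) G a * w) =
      ∑ i ∈ Finset.range (k + 2), (-1) ^ i * descentWord k (G ∘ omitIdx i) (a ∘ omitIdx i) := by
  induction k generalizing G a with
  | zero =>
    rw [gradedCommutator_descentWord_succ a (hG 0)]
    simp only [descentWord_zero, Function.comp_apply, Nat.succ_eq_add_one, zero_add, (hG 1).eq,
      pow_zero, one_mul, sub_self, mul_zero, sub_zero]
    rw [hres 0]
    simp [Finset.sum_range_succ, omitIdx, sub_eq_add_neg]
  | succ k ih =>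
    have hhead : G 0 * (w * (a 1 - a 0) + (a 1 - a 0) * w) *
        descentWord (k + 1) (G ∘ Nat.succ) (a ∘ Nat.succ) = (G 1 - G 0) * (a 2 - a 1) *
          descentWord k ((G ∘ Nat.succ) ∘ Nat.succ) ((a ∘ Nat.succ) ∘ Nat.succ) := by
      rw [descentWord_succ, ← hres 0]
      simp only [Function.comp_apply, mul_assoc, Nat.succ_eq_add_one, zero_add, one_add_one_eq_two]
    have htail := ih (G := G ∘ Nat.succ) (a := a ∘ Nat.succ)
      (fun i => hG (i + 1)) (fun i => hres (i + 1))
    rw [gradedCommutator_descentWord_succ a (hG 0), hhead, htail, sum_descentWord_succ_omitIdx]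

end Algebra

section GeneratingSeries

open PowerSeries

variable {R : Type*} [Ring R]

/-- The geometric series `∑ F ^ n X ^ n = (1 - X F)⁻¹` of an element of a noncommutative ring. -/
noncomputable def geomSeries (F : R) : PowerSeries R := PowerSeries.mk (F ^ ·)

theorem geomSeries_mul_one_sub (F : R) : geomSeries F * (1 - X * C F) = 1 := by
  ext n
  cases n with
  | zero => simp [geomSeries, mul_sub, ← mul_assoc]
  | succ n =>
    rw [mul_sub, ← mul_assoc, (commute_X (geomSeries F)).eq, mul_assoc]
    simp [geomSeries, coeff_succ_X_mul, coeff_one, pow_succ]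

theorem one_sub_mul_geomSeries (F : R) : (1 - X * C F) * geomSeries F = 1 := by
  ext n
  cases n with
  | zero => simp [geomSeries, sub_mul, mul_assoc]
  | succ n => simp [geomSeries, sub_mul, mul_assoc, coeff_succ_X_mul, coeff_one, pow_succ']

theorem geomSeries_resolvent_identity (F F' : R) :
    geomSeries F * (X * C (F' - F)) * geomSeries F' = geomSeries F' - geomSeries F := by
  calc geomSeries F * (X * C (F' - F)) * geomSeries F'
      = geomSeries F * (1 - X * C F) * geomSeries F' -
          geomSeries F * ((1 - X * C F') * geomSeries F') := by
        rw [map_sub]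
        noncomm_ring
    _ = geomSeries F' - geomSeries F := by
        rw [geomSeries_mul_one_sub, one_sub_mul_geomSeries, one_mul, mul_one]

theorem commute_C_geomSeries {u F : R} (h : Commute u F) : Commute (C u) (geomSeries F) := by
  ext n
  simpa [geomSeries] using (h.pow_right n).eq

theorem coeff_descentWord (k n : ℕ) (G : ℕ → PowerSeries R) (a : ℕ → R) :
    coeff n (descentWord k G (C ∘ a)) =
      ∑ m ∈ Finset.Nat.antidiagonalTuple (k + 1) n,
        descentWord k (fun i => coeff (mext m i) (G i)) a := by
  induction k generalizing n G a with
  | zero => simp [descentWord, mext]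
  | succ k ih =>
    rw [sum_antidiagonalTuple_succ, descentWord_succ, mul_assoc, coeff_mul]
    refine Finset.sum_congr rfl fun p _ => ?_
    simp only [Function.comp_apply, ← map_sub, coeff_C_mul, Function.comp_assoc, ih,
      Finset.mul_sum]
    refine Finset.sum_congr rfl fun m _ => ?_
    have hm (i : ℕ) : mext (Fin.cons p.1 m : Fin (k + 2) → ℕ) (i + 1) = mext m i :=
      extendZero_cons_succ p.1 m i
    simp only [descentWord_succ, Function.comp_def, hm, mul_assoc]
    rfl

/-- The generating series `∑_n X ^ n ∑_{m_0+⋯+m_k = n} F_0^{m_0} (a_1 - a_0) F_1^{m_1} ⋯ F_k^{m_k}`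
of the descent products, where `F_i = u a_i + a_i u`. -/
noncomputable def descentSeries (u : R) (k : ℕ) (a : ℕ → R) : PowerSeries R :=
  descentWord k (fun i => geomSeries (u * a i + a i * u)) (C ∘ a)

theorem coeff_descentSeries (u : R) (k n : ℕ) (a : ℕ → R) :
    coeff n (descentSeries u k a) =
      ∑ m ∈ Finset.Nat.antidiagonalTuple (k + 1) n,
        descentWord k (fun i => (u * a i + a i * u) ^ mext m i) a := by
  simp [descentSeries, coeff_descentWord, geomSeries]

theorem gradedCommutator_descentSeries {u : R} (hu : u * u = 0) (k : ℕ) (a : ℕ → R) :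
    X * C u * descentSeries u (k + 1) a -
        (-1) ^ (k + 1) * (descentSeries u (k + 1) a * (X * C u)) =
      ∑ i ∈ Finset.range (k + 2), (-1) ^ i * descentSeries u k (a ∘ omitIdx i) := by
  refine gradedCommutator_descentWord k (fun i => ?_) fun i => ?_
  · exact (commute_X _).symm.mul_left (commute_C_geomSeries (commute_anticommutator hu (a i)))
  · rw [← geomSeries_resolvent_identity]
    have hcurv : X * C u * (C (a (i + 1)) - C (a i)) + (C (a (i + 1)) - C (a i)) * (X * C u) =
        X * C (u * a (i + 1) + a (i + 1) * u - (u * a i + a i * u)) := by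
      rw [← mul_assoc _ X, (commute_X (C (a (i + 1)) - C (a i))).eq]
      simp only [map_sub, map_add, map_mul]
      noncomm_ring
    rw [← hcurv]
    rfl

theorem gradedCommutator_coeff_descentSeries {u : R} (hu : u * u = 0) (k n : ℕ) (a : ℕ → R) :
    u * coeff n (descentSeries u (k + 1) a) -
        (-1) ^ (k + 1) * (coeff n (descentSeries u (k + 1) a) * u) =
      ∑ i ∈ Finset.range (k + 2), (-1) ^ i * coeff (n + 1) (descentSeries u k (a ∘ omitIdx i)) := by
  have hsign (i : ℕ) : (-1 : PowerSeries R) ^ i = C ((-1) ^ i) := by simp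
  have h := congrArg (coeff (n + 1)) (gradedCommutator_descentSeries hu k a)
  rw [← mul_assoc (descentSeries u (k + 1) a), (commute_X _).eq] at h
  simpa only [hsign, map_sub, map_sum, mul_assoc, coeff_succ_X_mul, coeff_C_mul, coeff_mul_C]
    using h

end GeneratingSeries

section LatticeForm

variable {D k l : ℕ}

/-- `ω` depends on its first `k` indices only: a `k`-form without the antisymmetry, such as the
products to which `alt` is applied. -/
def DependsOnFirst (k : ℕ) (ω : Coeff D) : Prop := ∀ n, DependsOn (ω n) (Set.Iio k)

/-- The sequence `μ` with its first `k` entries permuted by `σ`, as in `alt` and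
`IsLatticeForm`. -/
def permute {α : Type*} (σ : Equiv.Perm (Fin k)) (μ : ℕ → α) : ℕ → α :=
  fun i => if h : i < k then μ ↑(σ ⟨i, h⟩) else μ i

theorem permute_of_lt {α : Type*} (σ : Equiv.Perm (Fin k)) (μ : ℕ → α) {i : ℕ} (h : i < k) :
    permute σ μ i = μ ↑(σ ⟨i, h⟩) := dif_pos h

theorem permute_permute {α : Type*} (σ τ : Equiv.Perm (Fin k)) (μ : ℕ → α) :
    permute τ (permute σ μ) = permute (σ * τ) μ := by
  ext i
  by_cases h : i < k <;> simp [permute, h]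

theorem permute_extendZero {α : Type*} [Zero α] (σ : Equiv.Perm (Fin k)) (μ : Fin k → α) :
    permute σ (extendZero μ) = extendZero (μ ∘ σ) := by
  ext i
  by_cases h : i < k <;> simp [permute, extendZero, h]

theorem multiShift_zero (n : Site D) (μ : ℕ → Fin D) : multiShift 0 n μ = n := by
  ext x
  simp [multiShift]

theorem multiShift_congr (n : Site D) {μ ν : ℕ → Fin D} (h : ∀ i < k, μ i = ν i) :
    multiShift k n μ = multiShift k n ν := by
  ext x
  simp only [multiShift]
  exact congrArg _ (Finset.sum_congr rfl fun i hi => by rw [h i (Finset.mem_range.1 hi)])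

theorem IsLatticeForm.dependsOnFirst {ω : Coeff D} (h : IsLatticeForm D k ω) :
    DependsOnFirst k ω := h.1

theorem IsLatticeForm.apply_permute {ω : Coeff D} (h : IsLatticeForm D k ω) (n : Site D)
    (σ : Equiv.Perm (Fin k)) (μ : ℕ → Fin D) :
    ω n (permute σ μ) = ((Equiv.Perm.sign σ : ℤ) : ℝ) * ω n μ := h.2 n μ σ

theorem DependsOnFirst.sub {ω θ : Coeff D} (hω : DependsOnFirst k ω) (hθ : DependsOnFirst k θ) :
    DependsOnFirst k (ω - θ) := fun n _ _ h => congrArg₂ (· - ·) (hω n h) (hθ n h)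

theorem alt_apply (c : Coeff D) (n : Site D) (μ : ℕ → Fin D) :
    alt k c n μ = ((k.factorial : ℝ))⁻¹ *
      ∑ σ : Equiv.Perm (Fin k), ((Equiv.Perm.sign σ : ℤ) : ℝ) * c n (permute σ μ) := rfl

theorem DependsOnFirst.isLatticeForm_alt {c : Coeff D} (hc : DependsOnFirst k c) :
    IsLatticeForm D k (alt k c) := by
  refine ⟨fun n μ ν h => ?_, fun n μ σ => ?_⟩
  · have hperm (σ : Equiv.Perm (Fin k)) : c n (permute σ μ) = c n (permute σ ν) :=
      hc n fun i hi => by rw [permute_of_lt σ μ hi, permute_of_lt σ ν hi, h _ (Fin.is_lt _)]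
    simp only [alt_apply, hperm]
  · change alt k c n (permute σ μ) = _
    rw [alt_apply, alt_apply, mul_left_comm]
    congr 1
    rw [Finset.mul_sum]
    refine Fintype.sum_equiv (Equiv.mulLeft σ) _ _ fun τ => ?_
    rw [permute_permute, Equiv.coe_mulLeft, Equiv.Perm.sign_mul, ← mul_assoc]
    rcases Int.units_eq_one_or (Equiv.Perm.sign σ) with h | h <;> simp [h]

theorem IsLatticeForm.alt_eq_self {ω : Coeff D} (h : IsLatticeForm D k ω) : alt k ω = ω := by
  ext n μ
  have hterm (σ : Equiv.Perm (Fin k)) :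
      ((Equiv.Perm.sign σ : ℤ) : ℝ) * ω n (permute σ μ) = ω n μ := by
    rw [h.apply_permute, ← mul_assoc, ← Int.cast_mul, Int.units_coe_mul_self, Int.cast_one, one_mul]
  have hk : (k.factorial : ℝ) ≠ 0 := by positivity
  simp [alt_apply, hterm, Fintype.card_perm, hk]

theorem DependsOnFirst.isLatticeForm_extd {ω : Coeff D} (hω : DependsOnFirst k ω) :
    IsLatticeForm D (k + 1) (extd k ω) := by
  refine DependsOnFirst.isLatticeForm_alt fun n μ ν h => ?_
  have htail (x : Site D) : ω x (fun i => μ (i + 1)) = ω x fun i => ν (i + 1) :=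
    hω x fun i hi => h (i + 1) (Nat.succ_lt_succ hi)
  simp only [fdiff, htail, h 0 k.succ_pos]

theorem DependsOnFirst.isLatticeForm_wedge {ω θ : Coeff D} (hω : DependsOnFirst k ω)
    (hθ : DependsOnFirst l θ) : IsLatticeForm D (k + l) (wedge k l ω θ) := by
  refine DependsOnFirst.isLatticeForm_alt fun n μ ν h => ?_
  have hhead : ∀ i < k, μ i = ν i := fun i hi => h i (Nat.lt_add_right l hi)
  have htail : ∀ i < l, μ (i + k) = ν (i + k) := fun i hi => h _ (by simpa [add_comm k] using hi)
  change ω n μ * θ (multiShift k n μ) _ = ω n ν * θ (multiShift k n ν) _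
  rw [multiShift_congr n hhead, hω n hhead, hθ _ htail]

theorem isLatticeForm_one : IsLatticeForm D 0 (fun _ _ => 1) :=
  ⟨fun _ _ _ _ => rfl, fun _ _ σ => by simp [Subsingleton.elim σ 1]⟩

theorem DependsOnFirst.isLatticeForm_wpow {F : Coeff D} (hF : DependsOnFirst 2 F) (m : ℕ) :
    IsLatticeForm D (2 * m) (wpow F m) := by
  induction m with
  | zero => exact isLatticeForm_one
  | succ m ih =>
    rw [mul_add_one, add_comm]
    exact hF.isLatticeForm_wedge ih.dependsOnFirst

theorem isLatticeForm_wedgeList {L : List (ℕ × Coeff D)}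
    (h : ∀ p ∈ L, DependsOnFirst p.1 p.2) :
    IsLatticeForm D (L.map Prod.fst).sum (wedgeList L) := by
  induction L with
  | nil => exact isLatticeForm_one
  | cons p L ih =>
    rw [List.forall_mem_cons] at h
    exact h.1.isLatticeForm_wedge (ih h.2).dependsOnFirst

variable (D k) in
/-- The real vector space of lattice `k`-forms. -/
def latticeForms : Submodule ℝ (Coeff D) where
  carrier := {ω | IsLatticeForm D k ω}
  zero_mem' := ⟨fun _ _ _ _ => rfl, fun _ _ _ => (mul_zero _).symm⟩
  add_mem' hω hθ := ⟨fun n μ ν h => congrArg₂ (· + ·) (hω.1 n μ ν h) (hθ.1 n μ ν h),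
    fun n μ σ => (congrArg₂ (· + ·) (hω.2 n μ σ) (hθ.2 n μ σ)).trans (mul_add _ _ _).symm⟩
  smul_mem' c _ hω := ⟨fun n μ ν h => congrArg (c * ·) (hω.1 n μ ν h),
    fun n μ σ => (congrArg (c * ·) (hω.2 n μ σ)).trans (mul_left_comm _ _ _)⟩

end LatticeForm

section ExteriorAlgebra

open ExteriorAlgebra

variable {R M : Type*} [CommRing R] [AddCommGroup M] [Module R M]

theorem ι_mul_ιMulti (x : M) {k : ℕ} (v : Fin k → M) :
    ι R x * ιMulti R k v = (-1) ^ k * (ιMulti R k v * ι R x) := by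
  induction k with
  | zero => simp
  | succ k ih =>
    rw [ιMulti_succ_apply, ← mul_assoc, eq_neg_of_add_eq_zero_left (ι_add_mul_swap x (v 0)),
      neg_mul, mul_assoc, ih, mul_assoc, pow_succ]
    rcases neg_one_pow_eq_or (ExteriorAlgebra R M) k with h | h <;> simp [h]

end ExteriorAlgebra

section Operators

open ExteriorAlgebra (ι ιMulti)

variable {D k l : ℕ}

variable (D) in
/-- Fields on the lattice with values in the exterior algebra, the space on which lattice forms act
as operators. -/
abbrev LatticeField := Site D → ExteriorAlgebra ℝ (Fin D → ℝ)

/-- The action of functions on lattice fields by pointwise multiplication. -/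
def mulOp : (Site D → ℝ) →ₐ[ℝ] Module.End ℝ (LatticeField D) :=
  Algebra.lsmul ℝ ℝ (LatticeField D)

/-- The differential `dx_μ` as an operator: translation by `ê_μ` followed by multiplication by the
`μ`-th generator of the exterior algebra. -/
def dx (μ : Fin D) : Module.End ℝ (LatticeField D) where
  toFun f n := ι ℝ (Pi.single μ 1) * f (shiftSite n μ)
  map_add' _ _ := funext fun _ => mul_add _ _ _
  map_smul' c f := funext fun n => mul_smul_comm c _ (f (shiftSite n μ))

theorem dx_apply (μ : Fin D) (f : LatticeField D) (n : Site D) :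
    dx μ f n = ι ℝ (Pi.single μ 1) * f (shiftSite n μ) := rfl

theorem shiftSite_comm (n : Site D) (μ ν : Fin D) :
    shiftSite (shiftSite n μ) ν = shiftSite (shiftSite n ν) μ :=
  funext fun _ => add_right_comm _ _ _

theorem dx_mul_self (μ : Fin D) : dx μ * dx μ = 0 := by
  ext f n
  simp [dx_apply, ← mul_assoc]

theorem dx_anticomm (μ ν : Fin D) : dx μ * dx ν + dx ν * dx μ = 0 := by
  ext f n
  simp only [LinearMap.add_apply, Module.End.mul_apply, Pi.add_apply, dx_apply,
    shiftSite_comm n ν, ← mul_assoc, ← add_mul, ExteriorAlgebra.ι_add_mul_swap, zero_mul]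
  rfl

theorem dx_mul_mulOp (μ : Fin D) (g : Site D → ℝ) :
    dx μ * mulOp g = mulOp (fun n => g (shiftSite n μ)) * dx μ :=
  LinearMap.ext fun f => funext fun n =>
    mul_smul_comm (g (shiftSite n μ)) (ι ℝ (Pi.single μ 1)) (f (shiftSite n μ))

theorem mulOp_fdiff_mul_dx (μ : Fin D) (g : Site D → ℝ) :
    mulOp (fdiff μ g) * dx μ = dx μ * mulOp g - mulOp g * dx μ := by
  rw [dx_mul_mulOp, ← sub_mul, ← map_sub]
  rfl

variable (D) in
/-- The operator `∑ dx_μ`, whose graded commutator with a form is the exterior derivative. -/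
def dxSum : Module.End ℝ (LatticeField D) := ∑ μ, dx μ

theorem dxSum_mul_self : dxSum D * dxSum D = 0 :=
  sum_mul_self_eq_zero_of_anticomm _ _ (fun μ _ => dx_mul_self μ) fun μ _ ν _ => dx_anticomm μ ν

/-- The extension of `dx` to the exterior algebra, by linearity and multiplicativity. -/
def dxHom : ExteriorAlgebra ℝ (Fin D → ℝ) →ₐ[ℝ] Module.End ℝ (LatticeField D) :=
  ExteriorAlgebra.lift ℝ ⟨Fintype.linearCombination ℝ dx, fun v => by
    rw [Fintype.linearCombination_apply]
    refine sum_mul_self_eq_zero_of_anticomm _ _ (fun μ _ => ?_) fun μ _ ν _ => ?_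
    · rw [smul_mul_smul_comm, dx_mul_self, smul_zero]
    · rw [smul_mul_smul_comm, smul_mul_smul_comm, mul_comm (v ν), ← smul_add, dx_anticomm,
        smul_zero]⟩

theorem dxHom_ι_single (μ : Fin D) : dxHom (ι ℝ (Pi.single μ 1)) = dx μ := by
  rw [dxHom, ExteriorAlgebra.lift_ι_apply, Fintype.linearCombination_apply_single, one_smul]

/-- The operator `dx_{μ_1} ∧ ⋯ ∧ dx_{μ_k}`. -/
def dxs (μ : Fin k → Fin D) : Module.End ℝ (LatticeField D) :=
  dxHom (ιMulti ℝ k fun i => Pi.single (μ i) 1)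

theorem dxs_zero (μ : Fin 0 → Fin D) : dxs μ = 1 := by simp [dxs]

theorem dxs_cons (μ : Fin D) (ν : Fin k → Fin D) :
    dxs (Fin.cons μ ν : Fin (k + 1) → Fin D) = dx μ * dxs ν := by
  rw [dxs, ExteriorAlgebra.ιMulti_succ_apply, map_mul, Fin.cons_zero, dxHom_ι_single]
  rfl

theorem dxs_append (μ : Fin k → Fin D) (ν : Fin l → Fin D) :
    dxs (Fin.append μ ν) = dxs μ * dxs ν := by
  rw [dxs, dxs, dxs, ← map_mul, ExteriorAlgebra.ιMulti_mul_ιMulti]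
  congr 2
  ext i : 1
  cases i using Fin.addCases <;> simp

theorem dxs_comp_perm (μ : Fin k → Fin D) (σ : Equiv.Perm (Fin k)) :
    dxs (μ ∘ σ) = ((Equiv.Perm.sign σ : ℤ) : ℝ) • dxs μ := by
  have h := (ιMulti ℝ k).map_perm (fun i => (Pi.single (μ i) 1 : Fin D → ℝ)) σ
  rw [dxs, dxs, ← map_smul, Int.cast_smul_eq_zsmul]
  exact congrArg dxHom h

theorem dx_mul_dxs (μ : Fin D) (ν : Fin k → Fin D) :
    dx μ * dxs ν = (-1) ^ k * (dxs ν * dx μ) := by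
  rw [← dxHom_ι_single, dxs, ← map_mul, ι_mul_ιMulti]
  simp

theorem dxs_apply_const (μ : Fin k → Fin D) (y : ExteriorAlgebra ℝ (Fin D → ℝ)) :
    dxs μ (fun _ => y) = fun _ => ιMulti ℝ k (fun i => Pi.single (μ i) 1) * y := by
  induction k with
  | zero => simp [dxs_zero]
  | succ k ih =>
    cases μ using Fin.consCases with
    | cons μ ν =>
      rw [dxs_cons, Module.End.mul_apply, ih, ExteriorAlgebra.ιMulti_succ_apply]
      ext n
      rw [dx_apply, mul_assoc]
      rfl

variable [NeZero D]

theorem multiShift_succ_cons (n : Site D) (μ : Fin D) (ν : Fin k → Fin D) :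
    multiShift (k + 1) n (extendZero (Fin.cons μ ν : Fin (k + 1) → Fin D)) =
      multiShift k (shiftSite n μ) (extendZero ν) := by
  ext x
  simp only [multiShift, shiftSite, Finset.sum_range_succ', extendZero_cons_succ,
    extendZero_cons_zero]
  rw [add_comm (∑ i ∈ _, _), add_assoc]
  rfl

theorem dxs_mul_mulOp (μ : Fin k → Fin D) (g : Site D → ℝ) :
    dxs μ * mulOp g = mulOp (fun n => g (multiShift k n (extendZero μ))) * dxs μ := by
  induction k with
  | zero => simp [dxs_zero, multiShift_zero]
  | succ k ih =>
    cases μ using Fin.consCases with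
    | cons μ ν =>
      rw [dxs_cons, mul_assoc, ih, ← mul_assoc, dx_mul_mulOp, mul_assoc]
      simp only [multiShift_succ_cons]

/-- The coefficient function `ω_{μ_1⋯μ_k}` of a form; the indices beyond the first `k` are set
to `0`. -/
def component (μ : Fin k → Fin D) : Coeff D →ₗ[ℝ] Site D → ℝ where
  toFun ω n := ω n (extendZero μ)
  map_add' _ _ := rfl
  map_smul' _ _ := rfl

variable (k) in
/-- A `k`-form `ω` as the operator `∑ ω_{μ_1⋯μ_k} dx_{μ_1} ∧ ⋯ ∧ dx_{μ_k}` on lattice fields. -/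
def formOp : Coeff D →ₗ[ℝ] Module.End ℝ (LatticeField D) :=
  ∑ μ : Fin k → Fin D, LinearMap.mulRight ℝ (dxs μ) ∘ₗ mulOp.toLinearMap ∘ₗ component μ

theorem formOp_apply (ω : Coeff D) :
    formOp k ω = ∑ μ : Fin k → Fin D, mulOp (component μ ω) * dxs μ := by
  simp [formOp]

theorem formOp_alt (c : Coeff D) : formOp k (alt k c) = formOp k c := by
  have hperm (σ : Equiv.Perm (Fin k)) :
      ∑ μ, ((Equiv.Perm.sign σ : ℤ) : ℝ) • (mulOp (component (μ ∘ σ) c) * dxs μ) =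
        formOp k c := by
    rw [formOp_apply]
    refine Fintype.sum_equiv (Equiv.arrowCongr σ.symm (Equiv.refl _)) _ _ fun μ => ?_
    change _ = mulOp (component (μ ∘ σ) c) * dxs (μ ∘ σ)
    rw [dxs_comp_perm, mul_smul_comm]
  have hcomponent (μ : Fin k → Fin D) : component μ (alt k c) = ((k.factorial : ℝ))⁻¹ •
      ∑ σ : Equiv.Perm (Fin k), ((Equiv.Perm.sign σ : ℤ) : ℝ) • component (μ ∘ σ) c := by
    ext n
    simp [component, alt_apply, permute_extendZero]
  have hk : (k.factorial : ℝ) ≠ 0 := by positivity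
  rw [formOp_apply]
  simp only [hcomponent, map_smul, map_sum, smul_mul_assoc, Finset.sum_mul]
  rw [← Finset.smul_sum, Finset.sum_comm]
  simp only [hperm, Finset.sum_const, Finset.card_univ, Fintype.card_perm, Fintype.card_fin]
  rw [← Nat.cast_smul_eq_nsmul ℝ, inv_smul_smul₀ hk]

theorem extendZero_append_of_lt (μ : Fin k → Fin D) (ν : Fin l → Fin D) {i : ℕ} (h : i < k) :
    extendZero (Fin.append μ ν) i = extendZero μ i := by
  rw [extendZero_of_lt _ (Nat.lt_add_right l h), extendZero_of_lt _ h]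
  exact Fin.append_left μ ν ⟨i, h⟩

theorem extendZero_append_add (μ : Fin k → Fin D) (ν : Fin l → Fin D) (i : ℕ) :
    extendZero (Fin.append μ ν) (i + k) = extendZero ν i := by
  by_cases h : i < l
  · rw [extendZero_of_lt _ (by lia), extendZero_of_lt _ h, ← Fin.append_right μ ν ⟨i, h⟩]
    congr 1
    ext
    exact add_comm i k
  · rw [extendZero_of_le _ (by lia), extendZero_of_le _ (by lia)]

theorem formOp_wedge {ω : Coeff D} (hω : DependsOnFirst k ω) (θ : Coeff D) :
    formOp (k + l) (wedge k l ω θ) = formOp k ω * formOp l θ := by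
  rw [wedge, formOp_alt, formOp_apply, formOp_apply, formOp_apply,
    ← (Fin.appendEquiv k l).sum_comp, Fintype.sum_prod_type, Finset.sum_mul_sum]
  refine Finset.sum_congr rfl fun μ _ => Finset.sum_congr rfl fun ν _ => ?_
  have hhead : ∀ i < k, extendZero (Fin.append μ ν) i = extendZero μ i :=
    fun i hi => extendZero_append_of_lt μ ν hi
  have hcomponent : component (Fin.append μ ν)
        (fun n μ => ω n μ * θ (multiShift k n μ) fun i => μ (i + k)) =
      component μ ω * fun n => component ν θ (multiShift k n (extendZero μ)) := by
    ext n
    change ω n _ * θ (multiShift k n _) _ = ω n _ * θ _ _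
    simp only [hω n hhead, multiShift_congr n hhead, extendZero_append_add]
  change mulOp (component (Fin.append μ ν) _) * dxs (Fin.append μ ν) = _
  rw [hcomponent, map_mul, dxs_append, mul_assoc, mul_assoc, ← mul_assoc (dxs μ), dxs_mul_mulOp,
    mul_assoc]

theorem formOp_extd (ω : Coeff D) :
    formOp (k + 1) (extd k ω) = dxSum D * formOp k ω - (-1) ^ k * (formOp k ω * dxSum D) := by
  rw [extd, formOp_alt, formOp_apply, ← (Fin.consEquiv fun _ => Fin D).sum_comp,
    Fintype.sum_prod_type, dxSum, Finset.sum_mul, Finset.mul_sum, Finset.mul_sum,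
    ← Finset.sum_sub_distrib]
  refine Finset.sum_congr rfl fun μ _ => ?_
  rw [formOp_apply, Finset.mul_sum, Finset.sum_mul, Finset.mul_sum, ← Finset.sum_sub_distrib]
  refine Finset.sum_congr rfl fun ν _ => ?_
  have hcomponent : component (Fin.cons μ ν : Fin (k + 1) → Fin D)
      (fun n μ => fdiff (μ 0) (fun x => ω x fun i => μ (i + 1)) n) = fdiff μ (component ν ω) := by
    ext n
    simp [component, extendZero_cons_succ, extendZero_cons_zero, fdiff]
  change mulOp (component (Fin.cons μ ν : Fin (k + 1) → Fin D) _) *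
    dxs (Fin.cons μ ν : Fin (k + 1) → Fin D) = _
  rw [hcomponent, dxs_cons, ← mul_assoc, mulOp_fdiff_mul_dx, sub_mul, mul_assoc, mul_assoc,
    dx_mul_dxs, mul_assoc (mulOp _) (dxs ν)]
  rcases neg_one_pow_eq_or (Module.End ℝ (LatticeField D)) k with h | h <;> simp [h]

theorem formOp_curv (A : Coeff D) :
    formOp 2 (curv A) = dxSum D * formOp 1 A + formOp 1 A * dxSum D := by
  rw [curv, formOp_extd, neg_one_pow_mul_eq_smul ℝ, pow_one, neg_one_smul, sub_neg_eq_add]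

theorem formOp_one : formOp 0 (fun _ _ => (1 : ℝ) : Coeff D) = 1 := by
  have hcomponent (μ : Fin 0 → Fin D) : component μ (fun _ _ => (1 : ℝ)) = 1 := rfl
  simp [formOp_apply, hcomponent, dxs_zero]

theorem formOp_wpow {F : Coeff D} (hF : DependsOnFirst 2 F) (m : ℕ) :
    formOp (2 * m) (wpow F m) = formOp 2 F ^ m := by
  induction m with
  | zero => exact formOp_one
  | succ m ih => rw [mul_add_one, add_comm, wpow, formOp_wedge hF, ih, pow_succ']

theorem formOp_wedgeList {L : List (ℕ × Coeff D)} (h : ∀ p ∈ L, DependsOnFirst p.1 p.2) :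
    formOp (L.map Prod.fst).sum (wedgeList L) = (L.map fun p => formOp p.1 p.2).prod := by
  induction L with
  | nil => exact formOp_one
  | cons p L ih =>
    rw [List.forall_mem_cons] at h
    rw [List.map_cons (f := fun p : ℕ × Coeff D => formOp p.1 p.2), List.prod_cons, ← ih h.2]
    exact formOp_wedge h.1 (wedgeList L)

end Operators

section Injectivity

open ExteriorAlgebra (ιMulti)

variable {D k : ℕ}

/-- The linear functional which on `v_1 ∧ ⋯ ∧ v_k` is the minor of the matrix with rows `v_i` cut
out by the columns `ν 0, …, ν (k - 1)`. It reads off the coefficients of a form. -/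
noncomputable def minor (ν : ℕ → Fin D) : ExteriorAlgebra ℝ (Fin D → ℝ) →ₗ[ℝ] ℝ :=
  ExteriorAlgebra.liftAlternating fun k =>
    Matrix.detRowAlternating.compLinearMap (LinearMap.funLeft ℝ ℝ fun i : Fin k => ν i)

theorem minor_ιMulti_single (ν : ℕ → Fin D) (μ : Fin k → Fin D) :
    minor ν (ιMulti ℝ k fun i => Pi.single (μ i) 1) =
      ∑ σ : Equiv.Perm (Fin k),
        ((Equiv.Perm.sign σ : ℤ) : ℝ) * if μ = fun i => ν (σ i) then 1 else 0 := by
  rw [minor, ExteriorAlgebra.liftAlternating_apply_ιMulti]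
  change Matrix.det (Matrix.of fun i j : Fin k => (Pi.single (μ i) 1 : Fin D → ℝ) (ν j)) = _
  rw [← Matrix.det_transpose, Matrix.det_apply']
  refine Finset.sum_congr rfl fun σ _ => congrArg _ ?_
  simp only [Matrix.transpose_apply, Matrix.of_apply, Pi.single_apply, Finset.prod_ite_zero,
    Finset.mem_univ, true_imp_iff, Finset.prod_const_one, funext_iff, eq_comm]

variable [NeZero D]

theorem formOp_apply_one (ω : Coeff D) (n : Site D) :
    formOp k ω 1 n =
      ∑ μ : Fin k → Fin D, ω n (extendZero μ) • ιMulti ℝ k fun i => Pi.single (μ i) 1 := by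
  have hdxs (μ : Fin k → Fin D) : dxs μ 1 = fun _ => ιMulti ℝ k fun i => Pi.single (μ i) 1 :=
    (dxs_apply_const μ 1).trans (by simp only [mul_one])
  rw [formOp_apply, LinearMap.sum_apply, Finset.sum_apply]
  refine Finset.sum_congr rfl fun μ _ => ?_
  rw [Module.End.mul_apply, hdxs]
  rfl

theorem minor_formOp {ω : Coeff D} (hω : DependsOnFirst k ω) (n : Site D) (ν : ℕ → Fin D) :
    minor ν (formOp k ω 1 n) = k.factorial * alt k ω n ν := by
  have hperm (σ : Equiv.Perm (Fin k)) :
      ω n (extendZero fun i => ν (σ i)) = ω n (permute σ ν) :=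
    hω n fun i hi => by rw [extendZero_of_lt _ hi, permute_of_lt σ ν hi]
  have hk : (k.factorial : ℝ) ≠ 0 := by positivity
  rw [formOp_apply_one, map_sum, alt_apply, mul_inv_cancel_left₀ hk]
  simp only [map_smul, minor_ιMulti_single, smul_eq_mul, Finset.mul_sum]
  rw [Finset.sum_comm]
  refine Finset.sum_congr rfl fun σ _ => ?_
  simp [hperm, mul_comm]

theorem formOp_injOn : Set.InjOn (formOp k) {ω : Coeff D | IsLatticeForm D k ω} := by
  intro ω hω θ hθ h
  have hk : (k.factorial : ℝ) ≠ 0 := by positivity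
  ext n ν
  apply mul_left_cancel₀ hk
  rw [← hω.alt_eq_self, ← hθ.alt_eq_self, ← minor_formOp hω.dependsOnFirst,
    ← minor_formOp hθ.dependsOnFirst, h]

end Injectivity

section Descent

variable {D : ℕ}

theorem descentList_zero (A : ℕ → Coeff D) (m : ℕ → ℕ) :
    descentList 0 A m = [(2 * m 0, wpow (curv (A 0)) (m 0))] := by
  simp [descentList]

theorem descentList_succ (k : ℕ) (A : ℕ → Coeff D) (m : ℕ → ℕ) :
    descentList (k + 1) A m = (2 * m 0, wpow (curv (A 0)) (m 0)) :: (1, A 1 - A 0) ::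
      descentList k (A ∘ Nat.succ) (m ∘ Nat.succ) := by
  simp [descentList, List.range_succ_eq_map, List.flatMap_map]

theorem dependsOnFirst_of_mem_descentList {k : ℕ} {A : ℕ → Coeff D} (m : ℕ → ℕ)
    (hA : ∀ i ≤ k, DependsOnFirst 1 (A i)) :
    ∀ p ∈ descentList k A m, DependsOnFirst p.1 p.2 := by
  have hF : DependsOnFirst (2 * m 0) (wpow (curv (A 0)) (m 0)) :=
    ((hA 0 k.zero_le).isLatticeForm_extd.dependsOnFirst.isLatticeForm_wpow (m 0)).dependsOnFirst
  induction k generalizing A m with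
  | zero => simpa [descentList_zero] using hF
  | succ k ih =>
    have hA' : ∀ i ≤ k, DependsOnFirst 1 ((A ∘ Nat.succ) i) :=
      fun i hi => hA (i + 1) (Nat.succ_le_succ hi)
    rw [descentList_succ, List.forall_mem_cons, List.forall_mem_cons]
    refine ⟨hF, (hA 1 (by lia)).sub (hA 0 (by lia)), ih (m ∘ Nat.succ) hA' ?_⟩
    exact ((hA 1 (by lia)).isLatticeForm_extd.dependsOnFirst.isLatticeForm_wpow _).dependsOnFirst

theorem sum_degree_descentList (k : ℕ) (A : ℕ → Coeff D) (m : ℕ → ℕ) :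
    ((descentList k A m).map Prod.fst).sum = 2 * ∑ i ∈ Finset.range (k + 1), m i + k := by
  induction k generalizing A m with
  | zero => simp [descentList_zero]
  | succ k ih =>
    rw [descentList_succ, List.map_cons, List.map_cons, List.sum_cons, List.sum_cons, ih,
      Finset.sum_range_succ' _ (k + 1)]
    simp only [Function.comp_apply]
    ring

theorem sum_degree_descentList_mext {r k : ℕ} (hkr : k ≤ r) (A : ℕ → Coeff D)
    {m : Fin (k + 1) → ℕ} (hm : m ∈ Finset.Nat.antidiagonalTuple (k + 1) (r - k)) :
    ((descentList k A (mext m)).map Prod.fst).sum = 2 * r - k := by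
  have hsum : ∑ i ∈ Finset.range (k + 1), mext m i = r - k := by
    rw [← Finset.Nat.mem_antidiagonalTuple.1 hm, Finset.sum_range]
    exact Finset.sum_congr rfl fun i _ => extendZero_of_lt m i.is_lt
  rw [sum_degree_descentList, hsum]
  lia

theorem isLatticeForm_Qpoly {r k : ℕ} (hkr : k ≤ r) {A : ℕ → Coeff D}
    (hA : ∀ i ≤ k, DependsOnFirst 1 (A i)) : IsLatticeForm D (2 * r - k) (Qpoly r k A) := by
  refine (latticeForms D (2 * r - k)).sum_mem fun m hm => ?_
  rw [← sum_degree_descentList_mext hkr A hm]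
  exact isLatticeForm_wedgeList (dependsOnFirst_of_mem_descentList (mext m) hA)

variable [NeZero D]

theorem prod_formOp_descentList {k : ℕ} {A : ℕ → Coeff D} (m : ℕ → ℕ)
    (hA : ∀ i ≤ k, DependsOnFirst 1 (A i)) :
    ((descentList k A m).map fun p => formOp p.1 p.2).prod =
      descentWord k (fun i => formOp 2 (curv (A i)) ^ m i) (fun i => formOp 1 (A i)) := by
  induction k generalizing A m with
  | zero =>
    have hF := (hA 0 le_rfl).isLatticeForm_extd.dependsOnFirst
    simp [descentList_zero, descentWord_zero, formOp_wpow hF, curv]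
  | succ k ih =>
    have hF := (hA 0 (by lia)).isLatticeForm_extd.dependsOnFirst
    rw [descentList_succ, List.map_cons, List.map_cons, List.prod_cons, List.prod_cons,
      ih (A := A ∘ Nat.succ) (m ∘ Nat.succ) fun i hi => hA (i + 1) (Nat.succ_le_succ hi),
      descentWord_succ, map_sub, mul_assoc]
    exact congrArg (· * _) (formOp_wpow hF (m 0))

theorem formOp_Qpoly {r k : ℕ} (hkr : k ≤ r) {A : ℕ → Coeff D}
    (hA : ∀ i ≤ k, DependsOnFirst 1 (A i)) :
    formOp (2 * r - k) (Qpoly r k A) =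
      PowerSeries.coeff (r - k) (descentSeries (dxSum D) k fun i => formOp 1 (A i)) := by
  rw [coeff_descentSeries, Qpoly, map_sum]
  refine Finset.sum_congr rfl fun m hm => ?_
  simp only [← formOp_curv]
  rw [← prod_formOp_descentList (mext m) hA,
    ← formOp_wedgeList (dependsOnFirst_of_mem_descentList (mext m) hA),
    sum_degree_descentList_mext hkr A hm]

end Descent

/-- **Descent equations on the lattice.**
For `1 ≤ k ≤ r` and lattice 1-forms `A_0, …, A_k` on `ℤ^D`, the exterior
differential of the `k`-th Chern–Simons type characteristic class equals the
coboundary (alternating sum over the omission of one argument) of the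
`(k-1)`-th Chern–Simons type characteristic class. -/
theorem descent_equations (D r k : ℕ) (hD : 1 ≤ D) (hr : 1 ≤ r) (hk : 1 ≤ k) (hkr : k ≤ r)
    (A : ℕ → Coeff D) (hA : ∀ i ≤ k, IsLatticeForm D 1 (A i)) :
    extd (2 * r - k) (Qpoly r k A)
      = ∑ i ∈ Finset.range (k+1),
          ((-1 : ℝ) ^ i) • Qpoly (D := D) r (k-1) (fun j => if j < i then A j else A (j+1)) := by
  obtain ⟨k, rfl⟩ := Nat.exists_eq_add_one_of_ne_zero (Nat.one_le_iff_ne_zero.1 hk)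
  have : NeZero D := ⟨Nat.one_le_iff_ne_zero.1 hD⟩
  have homit (i : ℕ) : (fun j => if j < i then A j else A (j + 1)) = A ∘ omitIdx i :=
    funext fun j => (apply_ite A _ _ _).symm
  have hdegree : 2 * r - (k + 1) + 1 = 2 * r - k := by lia
  have hA' : ∀ i ≤ k + 1, DependsOnFirst 1 (A i) := fun i hi => (hA i hi).dependsOnFirst
  have hAomit (i : ℕ) : ∀ j ≤ k, DependsOnFirst 1 ((A ∘ omitIdx i) j) :=
    fun j hj => hA' _ (by unfold omitIdx; split_ifs <;> lia)
  have hQ := isLatticeForm_Qpoly hkr hA'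
  have hQomit (i : ℕ) := isLatticeForm_Qpoly (Nat.le_of_succ_le hkr) (hAomit i)
  have hparity : Even (2 * r - (k + 1)) ↔ Even (k + 1) := by rw [Nat.even_sub (by lia)]; simp
  simp only [homit, Nat.add_sub_cancel]
  refine formOp_injOn hQ.dependsOnFirst.isLatticeForm_extd
    (hdegree ▸ (latticeForms D _).sum_mem fun i _ => (latticeForms D _).smul_mem _ (hQomit i)) ?_
  rw [formOp_extd, formOp_Qpoly hkr hA', neg_one_pow_mul_eq_smul ℝ (2 * r - _),
    neg_one_pow_congr hparity, ← neg_one_pow_mul_eq_smul,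
    gradedCommutator_coeff_descentSeries dxSum_mul_self, map_sum, hdegree]
  refine Finset.sum_congr rfl fun i _ => ?_
  rw [map_smul, formOp_Qpoly (Nat.le_of_succ_le hkr) (hAomit i), neg_one_pow_mul_eq_smul ℝ,
    show r - (k + 1) + 1 = r - k by lia]
  rfl
end

section
/- Let D ≥ 1, let r ≥ 2 and 2 ≤ k ≤ r, and let A_0, …, A_k be lattice 1-forms on ℤ^D; set F_i = dA_i and η^{i,j} = A_i − A_j. Write compositions m = (m_0,…,m_k) ∈ ℕ^{k+1} with the constraint indicated under each sum, and in every displayed wedge product the factors appear exactly in the indicated order, the elided middle portions following the alternating pattern ⋯ ∧ F_t^{m_t} ∧ η^{t+1,t} ∧ F_{t+1}^{m_{t+1}} ∧ ⋯. Then: Σ_{j=2}^{k} (−1)^{j−1} Σ_{Σm_l = r−k, m_{j−2}=m_{j−1}=0} F_0^{m_0} ∧ η^{1,0} ∧ ⋯ ∧ F_{j−3}^{m_{j−3}} ∧ η^{j−2,j−3} ∧ η^{j−1,j−2} ∧ F_j^{m_j+1} ∧ η^{j+1,j} ∧ ⋯ ∧ F_k^{m_k} + Σ_{i=1}^{k−1}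 (−1)^i Σ_{Σm_l = r−k, m_i=m_{i+1}=0} F_0^{m_0} ∧ η^{1,0} ∧ ⋯ ∧ F_{i−1}^{m_{i−1}+1} ∧ η^{i+1,i} ∧ η^{i+2,i+1} ∧ F_{i+2}^{m_{i+2}} ∧ ⋯ ∧ F_k^{m_k} = Σ_{Σm_l = r−k+1, m_0=m_1=0} η^{2,1} ∧ F_2^{m_2} ∧ η^{3,2} ∧ ⋯ ∧ F_k^{m_k} + (−1)^k Σ_{Σm_l = r−k+1, m_{k−1}=m_k=0} F_0^{m_0} ∧ η^{1,0} ∧ ⋯ ∧ F_{k−2}^{m_{k−2}} ∧ η^{k−1,k−2} + Σ_{t=1}^{k−1} (−1)^t Σ_{Σm_l = r−k, m_t=m_{t+1}=0} F_0^{m_0} ∧ ⋯ ∧ F_{t−1}^{m_{t−1}+1} ∧ η^{t+1,t−1} ∧ η^{t+2,t+1} ∧ F_{t+2}^{m_{t+2}} ∧ ⋯ ∧ F_k^{m_k} + Σ_{s=1}^{k−1} (−1)^s Σ_{Σm_l = r−k+1, m_{s−1}=m_s=0} F_0^{m_0} ∧ ⋯ ∧ F_{s−2}^{m_{s−2}}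 ∧ η^{s−1,s−2} ∧ η^{s+1,s−1} ∧ F_{s+1}^{m_{s+1}} ∧ ⋯ ∧ F_k^{m_k}. -/
/-!
If `m_s = 0`, the factor `F_s^{m_s} = 1` disappears, and `η^{s+1,s-1} = η^{s+1,s} + η^{s,s-1}`
splits the product with `η^{s+1,s-1}` in place of `η^{s,s-1} ∧ η^{s+1,s}` into the two products in
which one of these two factors is deleted. Raising `m_p` by one turns a sum over compositions of
`r - k` into the sum over the compositions of `r - k + 1` with `m_p ≠ 0`. After these two steps,
the terms of index `s` on the two sides of the identity differ by `(-1)^s (E_s + E_{s+1})`, where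
`E_s` is the sum of the products without `η^{s,s-1}` over the compositions of `r - k + 1` with
`m_{s-1} = m_s = 0`. These differences telescope to `-E_1 - (-1)^k E_k`.
-/

open scoped BigOperators

/-- The descent product with possibly modified `η`-factors: the `η`-factor
`η^{j, low j} = A_j - A_{low j}` is used in the `j`-th slot, and the `η`-factor
with upper index `del` is deleted (the elided middle portions follow the
alternating pattern `⋯ ∧ F_t^{m_t} ∧ η ∧ F_{t+1}^{m_{t+1}} ∧ ⋯`; a factor
`F_t^0` is the empty product, i.e. the constant-1 0-form). -/
noncomputable def gList {D : ℕ} (k : ℕ) (A : ℕ → Coeff D) (m : ℕ → ℕ)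
    (low : ℕ → ℕ) (del : ℕ) : List (ℕ × Coeff D) :=
  (2 * m 0, wpow (curv (A 0)) (m 0)) ::
    (List.range k).flatMap (fun i =>
      (if i + 1 = del then [] else [(1, A (i+1) - A (low (i+1)))]) ++
      [(2 * m (i+1), wpow (curv (A (i+1))) (m (i+1)))])

/-- Bump the composition `m` by one in the `j`-th entry. -/
def bump (m : ℕ → ℕ) (j : ℕ) : ℕ → ℕ := fun i => if i = j then m i + 1 else m i

section Alternation

variable {D : ℕ}

/-- The right action of a permutation of the first `k` slots on a sequence of direction indices,
in the form in which it occurs in `alt`. -/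
def permuteIndices {k : ℕ} (σ : Equiv.Perm (Fin k)) (μ : ℕ → Fin D) : ℕ → Fin D :=
  fun i => if h : i < k then μ ↑(σ ⟨i, h⟩) else μ i

theorem permuteIndices_permuteIndices {k : ℕ} (σ τ : Equiv.Perm (Fin k)) (μ : ℕ → Fin D) :
    permuteIndices τ (permuteIndices σ μ) = permuteIndices (σ * τ) μ := by
  funext i
  by_cases h : i < k <;> simp [permuteIndices, h]

theorem alt_permuteIndices (k : ℕ) (c : Coeff D) (n : Site D) (μ : ℕ → Fin D)
    (σ : Equiv.Perm (Fin k)) :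
    alt k c n (permuteIndices σ μ) = ((Equiv.Perm.sign σ : ℤ) : ℝ) * alt k c n μ := by
  change (k.factorial : ℝ)⁻¹ * ∑ τ : Equiv.Perm (Fin k), ((Equiv.Perm.sign τ : ℤ) : ℝ) *
      c n (permuteIndices τ (permuteIndices σ μ)) =
    ((Equiv.Perm.sign σ : ℤ) : ℝ) * ((k.factorial : ℝ)⁻¹ *
      ∑ τ : Equiv.Perm (Fin k), ((Equiv.Perm.sign τ : ℤ) : ℝ) * c n (permuteIndices τ μ))
  rw [mul_left_comm]
  congr 1
  rw [Finset.mul_sum]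
  refine Fintype.sum_equiv (Equiv.mulLeft σ) _ _ fun τ => ?_
  rw [permuteIndices_permuteIndices, ← mul_assoc]
  congr 1
  rcases Int.units_eq_one_or (Equiv.Perm.sign σ) with hσ | hσ <;> simp [hσ]

theorem alt_alt (k : ℕ) (c : Coeff D) : alt k (alt k c) = alt k c := by
  funext n μ
  have sign_mul_alt (σ : Equiv.Perm (Fin k)) :
      ((Equiv.Perm.sign σ : ℤ) : ℝ) * alt k c n (permuteIndices σ μ) = alt k c n μ := by
    rw [alt_permuteIndices, ← mul_assoc]
    rcases Int.units_eq_one_or (Equiv.Perm.sign σ) with hσ | hσ <;> simp [hσ]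
  calc alt k (alt k c) n μ
      = (k.factorial : ℝ)⁻¹ * ∑ _σ : Equiv.Perm (Fin k), alt k c n μ :=
        congrArg ((k.factorial : ℝ)⁻¹ * ·) (Finset.sum_congr rfl fun σ _ => sign_mul_alt σ)
    _ = alt k c n μ := by
        simp [Fintype.card_perm, Nat.factorial_ne_zero]

theorem alt_add (k : ℕ) (c c' : Coeff D) : alt k (c + c') = alt k c + alt k c' := by
  funext n μ
  simp only [alt, Pi.add_apply, mul_add, Finset.sum_add_distrib]

end Alternation

section Wedge

variable {D : ℕ}

theorem wedge_add_left (k l : ℕ) (ω ω' θ : Coeff D) :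
    wedge k l (ω + ω') θ = wedge k l ω θ + wedge k l ω' θ := by
  simp only [wedge, ← alt_add]
  congr 1
  funext n μ
  exact add_mul _ _ _

theorem wedge_add_right (k l : ℕ) (ω θ θ' : Coeff D) :
    wedge k l ω (θ + θ') = wedge k l ω θ + wedge k l ω θ' := by
  simp only [wedge, ← alt_add]
  congr 1
  funext n μ
  exact mul_add _ _ _

theorem one_wedge (l : ℕ) (θ : Coeff D) : wedge 0 l (fun _ _ => 1) θ = alt l θ := by
  have multiShift_zero (n : Site D) (μ : ℕ → Fin D) : multiShift 0 n μ = n := by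
    funext ν; simp [multiShift]
  simp [wedge, multiShift_zero]

theorem alt_wedgeList (L : List (ℕ × Coeff D)) :
    alt (L.map Prod.fst).sum (wedgeList L) = wedgeList L := by
  cases L with
  | nil =>
    change alt 0 (fun _ _ => 1) = fun _ _ => 1
    funext n μ
    simp [alt]
  | cons p L => simp only [List.map_cons, List.sum_cons, wedgeList, wedge, alt_alt]

theorem wedgeList_append_one_cons (P L : List (ℕ × Coeff D)) :
    wedgeList (P ++ (0, fun _ _ => 1) :: L) = wedgeList (P ++ L) := by
  induction P with
  | nil => exact (one_wedge _ _).trans (alt_wedgeList L)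
  | cons p P ih => simp [wedgeList, ih]

theorem wedgeList_append_add_cons (P L : List (ℕ × Coeff D)) (d : ℕ) (ω ω' : Coeff D) :
    wedgeList (P ++ (d, ω + ω') :: L) =
      wedgeList (P ++ (d, ω) :: L) + wedgeList (P ++ (d, ω') :: L) := by
  induction P with
  | nil => exact wedge_add_left _ _ _ _ _
  | cons p P ih => simp [wedgeList, ih, wedge_add_right]

end Wedge

section DescentProducts

variable {D : ℕ}

/-- The block `η^{i+1, low (i+1)} ∧ F_{i+1}^{m_{i+1}}` of the product `gList`, without its
`η`-factor if `i + 1 = del`. -/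
noncomputable def gBlock (A : ℕ → Coeff D) (m low : ℕ → ℕ) (del i : ℕ) : List (ℕ × Coeff D) :=
  (if i + 1 = del then [] else [(1, A (i + 1) - A (low (i + 1)))]) ++
    [(2 * m (i + 1), wpow (curv (A (i + 1))) (m (i + 1)))]

theorem gBlock_congr {A : ℕ → Coeff D} {m low low' : ℕ → ℕ} {del del' i : ℕ}
    (hdel : i + 1 ≠ del) (hdel' : i + 1 ≠ del') (hlow : low (i + 1) = low' (i + 1)) :
    gBlock A m low del i = gBlock A m low' del' i := by
  rw [gBlock, gBlock, if_neg hdel, if_neg hdel', hlow]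

theorem gList_add (k l : ℕ) (A : ℕ → Coeff D) (m low : ℕ → ℕ) (del : ℕ) :
    gList (k + l) A m low del =
      gList k A m low del ++ (List.range l).flatMap fun i => gBlock A m low del (k + i) := by
  simp [gList, gBlock, List.range_add, List.flatMap_append, List.flatMap_map]

theorem gList_congr {k : ℕ} {A : ℕ → Coeff D} {m low low' : ℕ → ℕ} {del del' : ℕ}
    (h : ∀ i < k, gBlock A m low del i = gBlock A m low' del' i) :
    gList k A m low del = gList k A m low' del' :=
  congrArg (_ :: ·) (List.flatMap_congr fun i hi => h i (List.mem_range.mp hi))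

theorem exists_gList_eq_append (k : ℕ) (A : ℕ → Coeff D) (m : ℕ → ℕ) {s : ℕ} (hsk : s + 1 < k) :
    ∃ P T : List (ℕ × Coeff D), ∀ (low : ℕ → ℕ) (del : ℕ), (∀ b ≠ s + 2, low b = b - 1) →
      del = s + 1 ∨ del = s + 2 →
        gList k A m low del = P ++ (gBlock A m low del s ++ (gBlock A m low del (s + 1) ++ T)) := by
  obtain ⟨l, rfl⟩ := Nat.exists_eq_add_of_lt hsk
  -- Upper indices of `η` start at `1`, so `del = 0` deletes nothing.
  refine ⟨gList s A m (· - 1) 0,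
    (List.range l).flatMap fun i => gBlock A m (· - 1) 0 (s + 2 + i), fun low del hlow hdel => ?_⟩
  have block_eq (i : ℕ) (hi : i ≠ s) (hi' : i ≠ s + 1) :
      gBlock A m low del i = gBlock A m (· - 1) 0 i :=
    gBlock_congr (by omega) (by omega) (hlow _ (by omega))
  have prefix_eq : gList s A m low del = gList s A m (· - 1) 0 :=
    gList_congr fun i hi => block_eq i (by omega) (by omega)
  have suffix_eq : ((List.range l).flatMap fun i => gBlock A m low del (s + 2 + i)) =
      (List.range l).flatMap fun i => gBlock A m (· - 1) 0 (s + 2 + i) :=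
    List.flatMap_congr fun i _ => block_eq _ (by omega) (by omega)
  rw [show s + 1 + l + 1 = s + 2 + l by omega, gList_add, gList_add, prefix_eq, suffix_eq]
  simp [List.range_succ]

/-- The product `F_0^{m_0} ∧ η^{1,0} ∧ ⋯ ∧ η^{k,k-1} ∧ F_k^{m_k}` without its factor
`η^{s,s-1}`. -/
noncomputable def deletedProduct (k : ℕ) (A : ℕ → Coeff D) (s : ℕ) (m : ℕ → ℕ) : Coeff D :=
  wedgeList (gList k A m (fun a => a - 1) s)

/-- The product `F_0^{m_0} ∧ η^{1,0} ∧ ⋯ ∧ η^{k,k-1} ∧ F_k^{m_k}` without its factor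
`η^{s,s-1}` and with `η^{s+1,s-1}` in place of `η^{s+1,s}`. -/
noncomputable def bridgedProduct (k : ℕ) (A : ℕ → Coeff D) (s : ℕ) (m : ℕ → ℕ) : Coeff D :=
  wedgeList (gList k A m (fun a => if a = s + 1 then s - 1 else a - 1) s)

theorem bridgedProduct_eq_add {k s : ℕ} (hs : 1 ≤ s) (hsk : s < k) (A : ℕ → Coeff D)
    {m : ℕ → ℕ} (hm : m s = 0) :
    bridgedProduct k A s m = deletedProduct k A s m + deletedProduct k A (s + 1) m := by
  obtain ⟨s, rfl⟩ := Nat.exists_eq_add_of_le' hs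
  obtain ⟨P, T, hPT⟩ := exists_gList_eq_append k A m hsk
  set Q := (2 * m (s + 2), wpow (curv (A (s + 2))) (m (s + 2))) :: T with hQ
  have bridged_eq : bridgedProduct k A (s + 1) m = wedgeList (P ++ (1, A (s + 2) - A s) :: Q) := by
    rw [bridgedProduct, hPT _ _ (fun b hb => if_neg hb) (.inl rfl)]
    simp [gBlock, hm, wpow, wedgeList_append_one_cons, hQ]
  have deleted_eq : deletedProduct k A (s + 1) m =
      wedgeList (P ++ (1, A (s + 2) - A (s + 1)) :: Q) := by
    rw [deletedProduct, hPT _ _ (fun _ _ => rfl) (.inl rfl)]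
    simp [gBlock, hm, wpow, wedgeList_append_one_cons, hQ]
  have deleted_succ_eq : deletedProduct k A (s + 2) m =
      wedgeList (P ++ (1, A (s + 1) - A s) :: Q) := by
    rw [deletedProduct, hPT _ _ (fun _ _ => rfl) (.inr rfl), List.append_cons,
      ← wedgeList_append_one_cons (P ++ [_]) Q]
    simp [gBlock, hm, wpow, hQ]
  rw [bridged_eq, deleted_eq, deleted_succ_eq, ← wedgeList_append_add_cons, sub_add_sub_cancel]

end DescentProducts

section CompositionSums

theorem mext_add_single {k : ℕ} (m : Fin k → ℕ) (p : Fin k) :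
    mext (m + Pi.single p 1) = bump (mext m) p := by
  funext i
  by_cases hi : i < k
  · simp only [mext, bump, hi, dif_pos, Pi.add_apply, Pi.single_apply, Fin.ext_iff]
    split_ifs <;> rfl
  · simp [mext, bump, hi, show i ≠ p by omega]

variable {M : Type*} [AddCommMonoid M]

theorem sum_antidiagonalTuple_bump {k p : ℕ} (n : ℕ) (hp : p < k) (f : (ℕ → ℕ) → M) :
    ∑ m ∈ Finset.Nat.antidiagonalTuple k n, f (bump (mext m) p) =
      ∑ m ∈ (Finset.Nat.antidiagonalTuple k (n + 1)).filter (fun m => mext m p ≠ 0),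
        f (mext m) := by
  lift p to Fin k using hp
  have mext_apply (m : Fin k → ℕ) : mext m p = m p := by simp [mext]
  have sum_add_single (m : Fin k → ℕ) :
      ∑ i, (m + Pi.single p 1 : Fin k → ℕ) i = ∑ i, m i + 1 := by
    simp [Finset.sum_add_distrib]
  have sub_add_single {m : Fin k → ℕ} (hm : mext m p ≠ 0) :
      m - Pi.single p 1 + Pi.single p 1 = m :=
    tsub_add_cancel_of_le <| update_le_iff.mpr
      ⟨Nat.one_le_iff_ne_zero.mpr (mext_apply m ▸ hm), fun _ _ => Nat.zero_le _⟩
  refine Finset.sum_nbij' (· + Pi.single p 1) (· - Pi.single p 1) ?_ ?_ ?_ ?_ ?_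
  · intro m hm
    rw [Finset.Nat.mem_antidiagonalTuple] at hm
    rw [Finset.mem_filter, Finset.Nat.mem_antidiagonalTuple, sum_add_single, hm, mext_apply]
    simp
  · intro m hm
    rw [Finset.mem_filter, Finset.Nat.mem_antidiagonalTuple] at hm
    rw [Finset.Nat.mem_antidiagonalTuple]
    have := sum_add_single (m - Pi.single p 1)
    rw [sub_add_single hm.2] at this
    omega
  · exact fun m _ => add_tsub_cancel_right _ _
  · exact fun m hm => sub_add_single (Finset.mem_filter.mp hm).2
  · exact fun m _ => congrArg f (mext_add_single m p).symm

/-- The compositions `m_0 + ⋯ + m_k = n` with `m_a = m_b = 0`. -/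
def vanishingCompositions (k n a b : ℕ) : Finset (Fin (k + 1) → ℕ) :=
  (Finset.Nat.antidiagonalTuple (k + 1) n).filter fun m => mext m a = 0 ∧ mext m b = 0

theorem sum_vanishingCompositions_bump {k p a b : ℕ} (n : ℕ) (hp : p ≤ k) (ha : a ≠ p)
    (hb : b ≠ p) (f : (ℕ → ℕ) → M) :
    ∑ m ∈ vanishingCompositions k n a b, f (bump (mext m) p) =
      ∑ m ∈ (vanishingCompositions k (n + 1) a b).filter (fun m => mext m p ≠ 0), f (mext m) := by
  have := sum_antidiagonalTuple_bump n (Nat.lt_succ_of_le hp)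
    fun m => if m a = 0 ∧ m b = 0 then f m else 0
  simpa only [bump, if_neg ha, if_neg hb, ← Finset.sum_filter, vanishingCompositions,
    Finset.filter_filter, and_comm (a := _ ≠ _), Nat.succ_eq_add_one] using this

-- Both sides sum over the compositions with `m_b = 0` and (`m_a = 0` or `m_c = 0`).
theorem sum_vanishingCompositions_exchange (k n a b c : ℕ) (f : (Fin (k + 1) → ℕ) → M) :
    ∑ m ∈ (vanishingCompositions k n b c).filter (fun m => mext m a ≠ 0), f m +
        ∑ m ∈ vanishingCompositions k n a b, f m =
      ∑ m ∈ (vanishingCompositions k n a b).filter (fun m => mext m c ≠ 0), f m +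
        ∑ m ∈ vanishingCompositions k n b c, f m := by
  simp only [vanishingCompositions, Finset.sum_filter, ← Finset.sum_add_distrib]
  refine Finset.sum_congr rfl fun m _ => ?_
  split_ifs <;> simp_all

end CompositionSums

/-- The sum of the products without `η^{s,s-1}` over the compositions of `n` with
`m_{s-1} = m_s = 0`. -/
noncomputable def deletedSum {D : ℕ} (k n : ℕ) (A : ℕ → Coeff D) (s : ℕ) : Coeff D :=
  ∑ m ∈ vanishingCompositions k n (s - 1) s, deletedProduct k A s (mext m)

theorem sum_bridgedProduct_eq {D k s : ℕ} (n : ℕ) (hs : 1 ≤ s) (hsk : s < k) (A : ℕ → Coeff D) :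
    ∑ m ∈ vanishingCompositions k n s (s + 1), bridgedProduct k A s (bump (mext m) (s - 1)) +
        ∑ m ∈ vanishingCompositions k (n + 1) (s - 1) s, bridgedProduct k A s (mext m) =
      ∑ m ∈ vanishingCompositions k n (s - 1) s,
          deletedProduct k A (s + 1) (bump (mext m) (s + 1)) +
        ∑ m ∈ vanishingCompositions k n s (s + 1), deletedProduct k A s (bump (mext m) (s - 1)) +
        (deletedSum k (n + 1) A s + deletedSum k (n + 1) A (s + 1)) := by
  set B := (vanishingCompositions k (n + 1) s (s + 1)).filter (fun m => mext m (s - 1) ≠ 0)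
  set C := vanishingCompositions k (n + 1) (s - 1) s
  have mext_eq_zero_of_mem_B (m) (hm : m ∈ B) : mext m s = 0 :=
    (Finset.mem_filter.mp (Finset.mem_filter.mp hm).1).2.1
  have mext_eq_zero_of_mem_C (m) (hm : m ∈ C) : mext m s = 0 := (Finset.mem_filter.mp hm).2.2
  have sum_bridged {S : Finset (Fin (k + 1) → ℕ)} (hS : ∀ m ∈ S, mext m s = 0) :
      ∑ m ∈ S, bridgedProduct k A s (mext m) =
        ∑ m ∈ S, deletedProduct k A s (mext m) + ∑ m ∈ S, deletedProduct k A (s + 1) (mext m) := by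
    rw [← Finset.sum_add_distrib]
    exact Finset.sum_congr rfl fun m hm => bridgedProduct_eq_add hs hsk A (hS m hm)
  have exchange := sum_vanishingCompositions_exchange k (n + 1) (s - 1) s (s + 1)
    fun m => deletedProduct k A (s + 1) (mext m)
  rw [sum_vanishingCompositions_bump n (by omega) (by omega) (by omega),
    sum_vanishingCompositions_bump n (by omega) (by omega) (by omega),
    sum_vanishingCompositions_bump n (by omega) (by omega) (by omega),
    sum_bridged mext_eq_zero_of_mem_B, sum_bridged mext_eq_zero_of_mem_C, add_add_add_comm,
    exchange]
  simp only [deletedSum, Nat.add_sub_cancel]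
  abel

theorem sum_Ico_neg_one_pow_smul_add_succ {R M : Type*} [Ring R] [AddCommGroup M] [Module R M]
    (E : ℕ → M) {a b : ℕ} (hab : a ≤ b) :
    ∑ s ∈ Finset.Ico a b, (-1 : R) ^ s • (E s + E (s + 1)) =
      (-1 : R) ^ a • E a - (-1 : R) ^ b • E b := by
  rw [← neg_sub, ← Finset.sum_Ico_sub (fun s => (-1 : R) ^ s • E s) hab, ← Finset.sum_neg_distrib]
  refine Finset.sum_congr rfl fun s _ => ?_
  simp only [pow_succ, mul_neg_one, neg_smul, smul_add]
  abel

/-- **Lemma 4.2** (the key `G`-invariant form identity behind the lattice descent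
equations), for lattice 1-forms `A_0, …, A_k` on `ℤ^D`, `2 ≤ k ≤ r`. -/
theorem descent_lemma (D r k : ℕ) (hD : 1 ≤ D) (hr : 2 ≤ r) (hk : 2 ≤ k) (hkr : k ≤ r)
    (A : ℕ → Coeff D) (hA : ∀ i ≤ k, IsLatticeForm D 1 (A i)) :
    -- Σ_{j=2}^{k} (−1)^{j−1} Σ_{Σm = r−k, m_{j−2}=m_{j−1}=0}
    --   F_0^{m_0} ∧ η^{1,0} ∧ ⋯ ∧ F_{j−3}^{m_{j−3}} ∧ η^{j−2,j−3} ∧ η^{j−1,j−2} ∧ F_j^{m_j+1} ∧ ⋯ ∧ F_k^{m_k}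
    (∑ j ∈ Finset.Icc 2 k, ((-1 : ℝ) ^ (j-1)) •
        ∑ m ∈ (Finset.Nat.antidiagonalTuple (k+1) (r-k)).filter
            (fun m => mext m (j-2) = 0 ∧ mext m (j-1) = 0),
          wedgeList (gList k A (bump (mext m) j) (fun a => a - 1) j))
    -- + Σ_{i=1}^{k−1} (−1)^i Σ_{Σm = r−k, m_i=m_{i+1}=0}
    --   F_0^{m_0} ∧ ⋯ ∧ F_{i−1}^{m_{i−1}+1} ∧ η^{i+1,i} ∧ η^{i+2,i+1} ∧ F_{i+2}^{m_{i+2}} ∧ ⋯ ∧ F_k^{m_k}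
    + (∑ i ∈ Finset.Icc 1 (k-1), ((-1 : ℝ) ^ i) •
        ∑ m ∈ (Finset.Nat.antidiagonalTuple (k+1) (r-k)).filter
            (fun m => mext m i = 0 ∧ mext m (i+1) = 0),
          wedgeList (gList k A (bump (mext m) (i-1)) (fun a => a - 1) i))
    =
    -- Σ_{Σm = r−k+1, m_0=m_1=0} η^{2,1} ∧ F_2^{m_2} ∧ η^{3,2} ∧ ⋯ ∧ F_k^{m_k}
    (∑ m ∈ (Finset.Nat.antidiagonalTuple (k+1) (r-k+1)).filter
          (fun m => mext m 0 = 0 ∧ mext m 1 = 0),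
        wedgeList (gList k A (mext m) (fun a => a - 1) 1))
    -- + (−1)^k Σ_{Σm = r−k+1, m_{k−1}=m_k=0} F_0^{m_0} ∧ ⋯ ∧ F_{k−2}^{m_{k−2}} ∧ η^{k−1,k−2}
    + ((-1 : ℝ) ^ k) •
      (∑ m ∈ (Finset.Nat.antidiagonalTuple (k+1) (r-k+1)).filter
          (fun m => mext m (k-1) = 0 ∧ mext m k = 0),
        wedgeList (gList k A (mext m) (fun a => a - 1) k))
    -- + Σ_{t=1}^{k−1} (−1)^t Σ_{Σm = r−k, m_t=m_{t+1}=0}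
    --   F_0^{m_0} ∧ ⋯ ∧ F_{t−1}^{m_{t−1}+1} ∧ η^{t+1,t−1} ∧ η^{t+2,t+1} ∧ F_{t+2}^{m_{t+2}} ∧ ⋯ ∧ F_k^{m_k}
    + (∑ t ∈ Finset.Icc 1 (k-1), ((-1 : ℝ) ^ t) •
        ∑ m ∈ (Finset.Nat.antidiagonalTuple (k+1) (r-k)).filter
            (fun m => mext m t = 0 ∧ mext m (t+1) = 0),
          wedgeList (gList k A (bump (mext m) (t-1))
            (fun a => if a = t+1 then t-1 else a - 1) t))
    -- + Σ_{s=1}^{k−1} (−1)^s Σ_{Σm = r−k+1, m_{s−1}=m_s=0}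
    --   F_0^{m_0} ∧ ⋯ ∧ F_{s−2}^{m_{s−2}} ∧ η^{s−1,s−2} ∧ η^{s+1,s−1} ∧ F_{s+1}^{m_{s+1}} ∧ ⋯ ∧ F_k^{m_k}
    + (∑ s ∈ Finset.Icc 1 (k-1), ((-1 : ℝ) ^ s) •
        ∑ m ∈ (Finset.Nat.antidiagonalTuple (k+1) (r-k+1)).filter
            (fun m => mext m (s-1) = 0 ∧ mext m s = 0),
          wedgeList (gList k A (mext m)
            (fun a => if a = s+1 then s-1 else a - 1) s)) := by
  have Icc_one : Finset.Icc 1 (k - 1) = Finset.Ico 1 k := by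
    ext s; simp only [Finset.mem_Icc, Finset.mem_Ico]; omega
  have sum_Icc_two (g : ℕ → Coeff D) :
      ∑ j ∈ Finset.Icc 2 k, g j = ∑ s ∈ Finset.Ico 1 k, g (s + 1) :=
    (Finset.sum_Ico_add' g 1 k 1).symm
  have bridged := Finset.sum_congr rfl fun s (hs : s ∈ Finset.Ico 1 k) =>
    congrArg ((-1 : ℝ) ^ s • ·) <| sum_bridgedProduct_eq (r - k)
      (Finset.mem_Ico.mp hs).1 (Finset.mem_Ico.mp hs).2 A
  have telescope := sum_Ico_neg_one_pow_smul_add_succ (R := ℝ)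
    (deletedSum k (r - k + 1) A) (one_le_two.trans hk)
  rw [Icc_one, sum_Icc_two]
  simp only [smul_add, Finset.sum_add_distrib, deletedSum, deletedProduct, bridgedProduct,
    vanishingCompositions, Nat.add_sub_cancel, Nat.reduceSubDiff] at bridged telescope ⊢
  linear_combination (norm := module) -bridged - telescope
end

section
/- Leibniz rule for the lattice exterior derivative: For a lattice k-form ω and a lattice l-form θ on ℤ^D, with the noncommutative wedge product, d(ω ∧ θ) = (dω) ∧ θ + (−1)^k ω ∧ (dθ). -/
open scoped BigOperators

/-! The rule already holds before antisymmetrization, up to the `(k+1)`-cycle that moves the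
differentiation index of `θ` past the `k` indices of `ω`; the shift in the wedge product is what
makes the product rule for finite differences close up. Antisymmetrization turns that cycle into
its sign `(-1) ^ k`, and absorbs the antisymmetrizations over fewer indices hidden in `ω ∧ θ`, `dω`
and `dθ`. -/

open Equiv Function

section PrefixPerm

/-- The action of `Perm (Fin k)` on index positions that fixes every position `i ≥ k`. -/
noncomputable def prefixPerm (k : ℕ) : Perm (Fin k) →* Perm ℕ :=
  Perm.viaEmbeddingHom Fin.valEmbedding

variable {k m N : ℕ}

theorem prefixPerm_apply_coe (σ : Perm (Fin k)) (i : Fin k) : prefixPerm k σ i = σ i :=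
  Perm.viaEmbedding_apply σ Fin.valEmbedding i

theorem prefixPerm_apply_of_lt (σ : Perm (Fin k)) {i : ℕ} (hi : i < k) :
    prefixPerm k σ i = σ ⟨i, hi⟩ :=
  prefixPerm_apply_coe σ ⟨i, hi⟩

theorem prefixPerm_apply_of_le (σ : Perm (Fin k)) {i : ℕ} (hi : k ≤ i) :
    prefixPerm k σ i = i :=
  Perm.viaEmbedding_apply_of_notMem σ Fin.valEmbedding i <| by
    rintro ⟨j, rfl⟩
    exact j.isLt.not_ge hi

theorem prefixPerm_viaFintypeEmbedding_of_forall_ne (σ : Perm (Fin m)) (f : Fin m ↪ Fin N) {i : ℕ}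
    (hi : ∀ j, (f j : ℕ) ≠ i) : prefixPerm N (σ.viaFintypeEmbedding f) i = i := by
  rcases lt_or_ge i N with h | h
  · rw [prefixPerm_apply_of_lt _ h, Perm.viaFintypeEmbedding_apply_notMem_range]
    rintro ⟨j, hj⟩
    exact hi j (congrArg Fin.val hj)
  · exact prefixPerm_apply_of_le _ h

theorem semiconj_prefixPerm_viaFintypeEmbedding (σ : Perm (Fin m)) {f : Fin m ↪ Fin N} {g : ℕ → ℕ}
    (hg : Injective g) (hfg : ∀ j, (f j : ℕ) = g j) :
    Semiconj g (prefixPerm m σ) (prefixPerm N (σ.viaFintypeEmbedding f)) := by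
  intro i
  rcases lt_or_ge i m with h | h
  · lift i to Fin m using h
    rw [prefixPerm_apply_coe, ← hfg, ← hfg, prefixPerm_apply_coe,
      Perm.viaFintypeEmbedding_apply_image]
  · rw [prefixPerm_apply_of_le σ h, prefixPerm_viaFintypeEmbedding_of_forall_ne]
    intro j hj
    exact j.isLt.not_ge (hg ((hfg j).symm.trans hj) ▸ h)

/-- The cycle `0 ↦ 1 ↦ ⋯ ↦ k ↦ 0` of index positions. Relabelling along it puts the first
index into position `k` and moves the `k` indices after it one position down. -/
def frontCycle (k i : ℕ) : ℕ :=
  if i < k then i + 1 else if i = k then 0 else i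

theorem prefixPerm_cycleRange (hk : k < N) :
    ⇑(prefixPerm N (Fin.cycleRange ⟨k, hk⟩)) = frontCycle k := by
  funext i
  rcases lt_or_ge i N with hi | hi
  · rw [prefixPerm_apply_of_lt _ hi]
    rcases le_or_gt i k with hik | hik
    · rw [Fin.coe_cycleRange_of_le hik]
      grind [frontCycle]
    · rw [Fin.cycleRange_of_gt hik]
      grind [frontCycle]
  · rw [prefixPerm_apply_of_le _ hi]
    grind [frontCycle]

end PrefixPerm

section Antisymmetrization

variable {D m N : ℕ}

/-- Precomposition of the index sequence of a coefficient function with a map of positions. -/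
def relabel (τ : ℕ → ℕ) : Coeff D →ₗ[ℝ] Coeff D where
  toFun c n μ := c n (μ ∘ τ)
  map_add' _ _ := rfl
  map_smul' _ _ := rfl

theorem relabel_apply (τ : ℕ → ℕ) (c : Coeff D) (n : Site D) (μ : ℕ → Fin D) :
    relabel τ c n μ = c n (μ ∘ τ) :=
  rfl

/-- The antisymmetrization `alt` as a linear map. -/
noncomputable def altLinearMap (N : ℕ) : Coeff D →ₗ[ℝ] Coeff D :=
  (N.factorial : ℝ)⁻¹ • ∑ σ : Perm (Fin N), Perm.sign σ • relabel (prefixPerm N σ)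

theorem altLinearMap_apply (N : ℕ) (c : Coeff D) :
    altLinearMap N c =
      (N.factorial : ℝ)⁻¹ • ∑ σ : Perm (Fin N), Perm.sign σ • relabel (prefixPerm N σ) c := by
  simp only [altLinearMap, LinearMap.smul_apply, LinearMap.sum_apply]

theorem comp_prefixPerm (μ : ℕ → Fin D) (σ : Perm (Fin N)) :
    μ ∘ prefixPerm N σ = fun i ↦ if h : i < N then μ (σ ⟨i, h⟩) else μ i := by
  funext i
  split_ifs with h
  · rw [comp_apply, prefixPerm_apply_of_lt σ h]
  · rw [comp_apply, prefixPerm_apply_of_le σ (not_lt.mp h)]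

theorem alt_eq_altLinearMap (N : ℕ) (c : Coeff D) : alt N c = altLinearMap N c := by
  rw [altLinearMap_apply]
  funext n μ
  simp only [alt, ← comp_prefixPerm, Pi.smul_apply, Finset.sum_apply, relabel_apply,
    Units.smul_def, ← Int.cast_smul_eq_zsmul ℝ, smul_eq_mul]

theorem altLinearMap_relabel_prefixPerm (τ : Perm (Fin N)) (c : Coeff D) :
    altLinearMap N (relabel (prefixPerm N τ) c) = Perm.sign τ • altLinearMap N c := by
  rw [altLinearMap_apply, altLinearMap_apply, smul_comm (Perm.sign τ),
    Finset.smul_sum (r := Perm.sign τ)]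
  congr 1
  refine Fintype.sum_equiv (Equiv.mulRight τ) _ _ fun σ ↦ ?_
  have sign_mul : Perm.sign τ * Perm.sign (σ * τ) = Perm.sign σ := by
    rw [Perm.sign_mul, mul_left_comm, Int.units_mul_self, mul_one]
  rw [coe_mulRight, smul_smul, sign_mul, map_mul]
  rfl

theorem alt_relabel_frontCycle {k : ℕ} (hk : k < N) (c : Coeff D) :
    alt N (relabel (frontCycle k) c) = (-1 : ℝ) ^ k • alt N c := by
  rw [alt_eq_altLinearMap, alt_eq_altLinearMap, ← prefixPerm_cycleRange hk,
    altLinearMap_relabel_prefixPerm, Fin.sign_cycleRange, Units.smul_def,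
    ← Int.cast_smul_eq_zsmul ℝ]
  push_cast
  rfl

/- Every `σ` in the inner average contributes the same amount: its sign occurs once in `alt m`
and once more when `alt N` absorbs the relabelling. -/
theorem alt_map_alt (f : Fin m ↪ Fin N) (L : Coeff D →ₗ[ℝ] Coeff D) (c : Coeff D)
    (hL : ∀ σ : Perm (Fin m), L (relabel (prefixPerm m σ) c) =
      relabel (prefixPerm N (σ.viaFintypeEmbedding f)) (L c)) :
    alt N (L (alt m c)) = alt N (L c) := by
  have term_eq (σ : Perm (Fin m)) :
      altLinearMap N (L (Perm.sign σ • relabel (prefixPerm m σ) c)) = altLinearMap N (L c) := by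
    rw [Units.smul_def, map_zsmul, map_zsmul, ← Units.smul_def, hL,
      altLinearMap_relabel_prefixPerm, Perm.viaFintypeEmbedding_sign, smul_smul,
      Int.units_mul_self, one_smul]
  have factorial_ne_zero : (m.factorial : ℝ) ≠ 0 := mod_cast m.factorial_ne_zero
  simp only [alt_eq_altLinearMap]
  rw [altLinearMap_apply m c]
  simp only [map_smul, map_sum, term_eq]
  rw [Finset.sum_const, Finset.card_univ, Fintype.card_perm, Fintype.card_fin,
    ← Nat.cast_smul_eq_nsmul ℝ, inv_smul_smul₀ factorial_ne_zero]

end Antisymmetrization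

section MultiShift

variable {D : ℕ}

theorem dependsOn_multiShift (k : ℕ) (n : Site D) : DependsOn (multiShift k n) (Set.Iio k) := by
  intro μ ν h
  funext x
  refine congrArg (n x + ·) (Finset.sum_congr rfl fun i hi ↦ ?_)
  rw [h i (Finset.mem_range.mp hi)]

theorem multiShift_comp_prefixPerm {k : ℕ} (n : Site D) (μ : ℕ → Fin D) (σ : Perm (Fin k)) :
    multiShift k n (μ ∘ prefixPerm k σ) = multiShift k n μ := by
  funext x
  simp only [multiShift, Finset.sum_range, comp_apply, prefixPerm_apply_coe]
  rw [Equiv.sum_comp σ fun i : Fin k ↦ if x = μ i then (1 : ℤ) else 0]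

theorem multiShift_shiftSite (k : ℕ) (n : Site D) (ν : Fin D) (μ : ℕ → Fin D) :
    multiShift k (shiftSite n ν) μ = shiftSite (multiShift k n μ) ν := by
  funext x
  exact add_right_comm _ _ _

theorem multiShift_succ (k : ℕ) (n : Site D) (μ : ℕ → Fin D) :
    multiShift (k + 1) n μ = shiftSite (multiShift k n fun i ↦ μ (i + 1)) (μ 0) := by
  funext x
  simp only [multiShift, shiftSite, Finset.sum_range_succ', add_assoc]

end MultiShift

section TensorOperations

variable {D : ℕ}

/-- The coefficient `Δ_{μ₀} ω_{μ₁⋯μ_k}` whose antisymmetrization is the exterior derivative. -/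
def tensorDiff : Coeff D →ₗ[ℝ] Coeff D where
  toFun ω n μ := fdiff (μ 0) (fun x ↦ ω x fun i ↦ μ (i + 1)) n
  map_add' _ _ := by
    funext n μ
    exact add_sub_add_comm _ _ _ _
  map_smul' _ _ := by
    funext n μ
    exact (mul_sub _ _ _).symm

/-- The shifted product `ω_{μ₁⋯μ_k}(n) θ_{ν₁⋯ν_l}(n + ê_{μ₁} + ⋯ + ê_{μ_k})` whose
antisymmetrization is the wedge product. -/
def tensorMul (k : ℕ) : Coeff D →ₗ[ℝ] Coeff D →ₗ[ℝ] Coeff D :=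
  LinearMap.mk₂ ℝ (fun ω θ n μ ↦ ω n μ * θ (multiShift k n μ) fun i ↦ μ (i + k))
    (fun _ _ _ ↦ by funext n μ; exact add_mul _ _ _)
    (fun _ _ _ ↦ by funext n μ; exact mul_assoc _ _ _)
    (fun _ _ _ ↦ by funext n μ; exact mul_add _ _ _)
    (fun _ _ _ ↦ by funext n μ; exact mul_left_comm _ _ _)

theorem tensorDiff_apply (ω : Coeff D) (n : Site D) (μ : ℕ → Fin D) :
    tensorDiff ω n μ =
      ω (shiftSite n (μ 0)) (fun i ↦ μ (i + 1)) - ω n fun i ↦ μ (i + 1) :=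
  rfl

theorem tensorMul_apply (k : ℕ) (ω θ : Coeff D) (n : Site D) (μ : ℕ → Fin D) :
    tensorMul k ω θ n μ = ω n μ * θ (multiShift k n μ) fun i ↦ μ (i + k) :=
  rfl

theorem extd_eq_alt_tensorDiff (k : ℕ) (ω : Coeff D) :
    extd k ω = alt (k + 1) (tensorDiff ω) :=
  rfl

theorem wedge_eq_alt_tensorMul (k l : ℕ) (ω θ : Coeff D) :
    wedge k l ω θ = alt (k + l) (tensorMul k ω θ) :=
  rfl

theorem extd_alt (m : ℕ) (c : Coeff D) : extd m (alt m c) = extd m c := by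
  refine alt_map_alt (Fin.succEmb m) tensorDiff c fun σ ↦ ?_
  have fixes_zero : prefixPerm (m + 1) (σ.viaFintypeEmbedding (Fin.succEmb m)) 0 = 0 :=
    prefixPerm_viaFintypeEmbedding_of_forall_ne σ _ fun j ↦ j.val.succ_ne_zero
  have shifts := semiconj_prefixPerm_viaFintypeEmbedding σ (f := Fin.succEmb m)
    (add_left_injective 1) fun _ ↦ rfl
  funext n μ
  simp only [relabel_apply, tensorDiff_apply, comp_def, fixes_zero, ← shifts.eq]

theorem wedge_alt_left (m l : ℕ) (c θ : Coeff D) :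
    wedge m l (alt m c) θ = wedge m l c θ := by
  refine alt_map_alt (Fin.castAddEmb l) ((tensorMul m).flip θ) c fun σ ↦ ?_
  have extends_σ : ⇑(prefixPerm (m + l) (σ.viaFintypeEmbedding (Fin.castAddEmb l))) =
      prefixPerm m σ :=
    funext fun i ↦ (semiconj_prefixPerm_viaFintypeEmbedding σ injective_id (fun _ ↦ rfl) i).symm
  have fixes_tail (i : ℕ) : prefixPerm m σ (i + m) = i + m :=
    prefixPerm_apply_of_le σ (Nat.le_add_left m i)
  funext n μ
  simp only [LinearMap.flip_apply, relabel_apply, tensorMul_apply, extends_σ,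
    multiShift_comp_prefixPerm, comp_apply, fixes_tail]

theorem wedge_alt_right {k : ℕ} (m : ℕ) {ω : Coeff D} (c : Coeff D)
    (hω : ∀ n, DependsOn (ω n) (Set.Iio k)) :
    wedge k m ω (alt m c) = wedge k m ω c := by
  refine alt_map_alt (Fin.natAddEmb k) (tensorMul k ω) c fun σ ↦ ?_
  set τ := prefixPerm (k + m) (σ.viaFintypeEmbedding (Fin.natAddEmb k))
  have fixes_head {i : ℕ} (hi : i < k) : τ i = i :=
    prefixPerm_viaFintypeEmbedding_of_forall_ne σ _ fun j hj ↦
      (hj ▸ Nat.le_add_right k j : k ≤ i).not_gt hi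
  have shifts : Semiconj (· + k) (prefixPerm m σ) τ :=
    semiconj_prefixPerm_viaFintypeEmbedding σ (add_left_injective k) fun j ↦ Nat.add_comm k j
  funext n μ
  have agree (i : ℕ) (hi : i ∈ Set.Iio k) : (μ ∘ τ) i = μ i := congrArg μ (fixes_head hi)
  simp only [relabel_apply, tensorMul_apply, hω n agree, dependsOn_multiShift k n agree]
  simp only [comp_def, ← shifts.eq]

theorem tensorDiff_tensorMul {k : ℕ} {ω : Coeff D} (θ : Coeff D)
    (hω : ∀ n, DependsOn (ω n) (Set.Iio k)) :
    tensorDiff (tensorMul k ω θ) = tensorMul (k + 1) (tensorDiff ω) θ +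
      relabel (frontCycle k) (tensorMul k ω (tensorDiff θ)) := by
  funext n μ
  have agree (i : ℕ) (hi : i ∈ Set.Iio k) : (μ ∘ frontCycle k) i = μ (i + 1) :=
    congrArg μ (if_pos hi)
  have cycle_zero : frontCycle k (0 + k) = 0 := by simp [frontCycle]
  have cycle_tail (i : ℕ) : frontCycle k (i + 1 + k) = i + k + 1 := by
    grind [frontCycle]
  simp only [Pi.add_apply, relabel_apply, tensorDiff_apply, tensorMul_apply, hω n agree,
    dependsOn_multiShift k n agree, comp_apply, cycle_zero, cycle_tail, multiShift_succ,
    multiShift_shiftSite, ← add_assoc]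
  ring

end TensorOperations

theorem lattice_leibniz_general {D : ℕ} (k l : ℕ) (ω θ : Coeff D)
    (hω : ∀ n, DependsOn (ω n) (Set.Iio k)) :
    extd (k + l) (wedge k l ω θ) =
      wedge (k + 1) l (extd k ω) θ + (-1 : ℝ) ^ k • wedge k (l + 1) ω (extd l θ) := by
  have hk : k < k + l + 1 := by lia
  calc extd (k + l) (wedge k l ω θ)
      = alt (k + l + 1) (tensorDiff (tensorMul k ω θ)) := extd_alt _ _
    _ = alt (k + l + 1) (tensorMul (k + 1) (tensorDiff ω) θ) +
          alt (k + l + 1) (relabel (frontCycle k) (tensorMul k ω (tensorDiff θ))) := by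
        simp only [tensorDiff_tensorMul θ hω, alt_eq_altLinearMap, map_add]
    _ = wedge (k + 1) l (tensorDiff ω) θ + (-1 : ℝ) ^ k • wedge k (l + 1) ω (tensorDiff θ) := by
        rw [alt_relabel_frontCycle hk, wedge_eq_alt_tensorMul, wedge_eq_alt_tensorMul,
          Nat.add_right_comm k 1 l, add_assoc k l 1]
    _ = wedge (k + 1) l (extd k ω) θ + (-1 : ℝ) ^ k • wedge k (l + 1) ω (extd l θ) := by
        rw [extd_eq_alt_tensorDiff, extd_eq_alt_tensorDiff, wedge_alt_left,
          wedge_alt_right _ _ hω]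

/-- **Leibniz rule for the lattice exterior derivative.** For a lattice `k`-form
`ω` and a lattice `l`-form `θ` on `ℤ^D`, with the noncommutative wedge product,
`d(ω ∧ θ) = (dω) ∧ θ + (−1)^k ω ∧ (dθ)`. -/
theorem lattice_leibniz (D k l : ℕ) (ω θ : Coeff D)
    (hω : IsLatticeForm D k ω) (hθ : IsLatticeForm D l θ) :
    extd (k+l) (wedge k l ω θ)
      = wedge (k+1) l (extd k ω) θ + ((-1 : ℝ) ^ k) • wedge k (l+1) ω (extd l θ) :=
  lattice_leibniz_general k l ω θ hω.1
end
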